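/- arXiv:2306.03605 — 9 statements merged into one kernel-verified Lean document; each statement's English description precedes it below -/
import Mathlib

section
/- Let F be a field, q a natural number, S a finite subset of F^q, and B a finite set of polynomials in F[x_1,...,x_q]. Then there exists a subset S' ⊆ S with |S'| ≤ |B| such that for every polynomial p in the F-linear span of B, if p(x) ≠ 0 for some x ∈ S, then p(x') ≠ 0 for some x' ∈ S'. -/
/-!
Restricted to the span of `B`, evaluation at a point `x` is a linear form determined by the vector
`(b(x))_{b ∈ B}`. Among these vectors, for `x ∈ S`, choose a maximal linearly independent family:
it has at most `|B|` members. A nonzero multiple of every other vector lies in its span, so a linear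
combination of `B` that vanishes at the chosen points vanishes on all of `S`.
-/

section LinearAlgebra

open Module Submodule

variable {ι R M V N : Type*}

theorem exists_finset_card_le_finrank_forall_smul_mem_span [Ring R] [StrongRankCondition R]
    [AddCommGroup V] [Module R V] [Module.Finite R V] (v : ι → V) (s : Set ι) :
    ∃ t : Finset ι, ↑t ⊆ s ∧ t.card ≤ finrank R V ∧
      ∀ i ∈ s, ∃ a : R, a ≠ 0 ∧ a • v i ∈ span R (v '' t) := by
  have := nontrivial_of_invariantBasisNumber R
  obtain ⟨u, hu, hmax⟩ := exists_maximal_linearIndepOn R (fun i : s ↦ v i)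
  have : Finite u := hu.finite
  obtain ⟨u, rfl⟩ := u.toFinite.exists_finset_coe
  refine ⟨u.map (.subtype _), by simp, ?_, fun i hi ↦ ?_⟩
  · simpa using LinearIndependent.fintype_card_le_finrank hu
  · have himage : v '' (u.map (.subtype _)) = (fun i : s ↦ v i) '' u := by
      simp [Set.image_image]
    rw [himage]
    by_cases hiu : (⟨i, hi⟩ : s) ∈ u
    · exact ⟨1, one_ne_zero, by simpa using subset_span (Set.mem_image_of_mem _ hiu)⟩
    · exact hmax ⟨i, hi⟩ hiu

theorem linearMap_apply_eq_zero_of_smul_mem_span [Semiring R] [IsDomain R]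
    [AddCommMonoid V] [Module R V] [AddCommMonoid N] [Module R N] [IsTorsionFree R N]
    {g : V →ₗ[R] N} {T : Set V} (hg : ∀ y ∈ T, g y = 0) {a : R} (ha : a ≠ 0) {x : V}
    (hx : a • x ∈ span R T) : g x = 0 := by
  have hker : span R T ≤ g.ker := span_le.2 hg
  have hax : a • g x = 0 := by simpa using hker hx
  exact (smul_eq_zero_iff_right ha).1 hax

theorem exists_linearMap_apply_eq_of_mem_span [CommSemiring R] [AddCommMonoid M] [Module R M]
    {B : Finset M} {p : M} (hp : p ∈ span R (B : Set M)) :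
    ∃ g : (B → R) →ₗ[R] R, ∀ f : Dual R M, g (fun b ↦ f b) = f p := by
  obtain ⟨c, rfl⟩ := mem_span_finset'.1 hp
  refine ⟨Fintype.linearCombination R c, fun f ↦ ?_⟩
  simp [Fintype.linearCombination_apply, mul_comm]

theorem exists_finset_card_le_forall_mem_span_dual_ne_zero [CommRing R] [IsDomain R]
    [AddCommGroup M] [Module R M] (f : ι → Dual R M) (s : Set ι) (B : Finset M) :
    ∃ t : Finset ι, ↑t ⊆ s ∧ t.card ≤ B.card ∧
      ∀ p ∈ span R (B : Set M), (∃ i ∈ s, f i p ≠ 0) → ∃ i ∈ t, f i p ≠ 0 := by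
  obtain ⟨t, hts, hcard, hspan⟩ :=
    exists_finset_card_le_finrank_forall_smul_mem_span (R := R) (fun i (b : B) ↦ f i b) s
  refine ⟨t, hts, by simpa using hcard, fun p hp ⟨i, hi, hip⟩ ↦ ?_⟩
  by_contra! hvanish
  obtain ⟨g, hg⟩ := exists_linearMap_apply_eq_of_mem_span hp
  obtain ⟨a, ha, hai⟩ := hspan i hi
  have hgi : g (fun b ↦ f i b) = 0 := by
    refine linearMap_apply_eq_zero_of_smul_mem_span (Set.forall_mem_image.2 fun j hj ↦ ?_) ha hai
    rw [hg, hvanish j hj]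
  exact hip ((hg (f i)).symm.trans hgi)

end LinearAlgebra

theorem stmt_0_general {R σ : Type*} [CommRing R] [IsDomain R]
    (S : Set (σ → R)) (B : Finset (MvPolynomial σ R)) :
    ∃ S' : Finset (σ → R), ↑S' ⊆ S ∧ S'.card ≤ B.card ∧
      ∀ p ∈ Submodule.span R (B : Set (MvPolynomial σ R)),
        (∃ x ∈ S, MvPolynomial.eval x p ≠ 0) →
        ∃ x' ∈ S', MvPolynomial.eval x' p ≠ 0 :=
  exists_finset_card_le_forall_mem_span_dual_ne_zero
    (fun x ↦ (MvPolynomial.aeval x).toLinearMap) S B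

/-- Representative set for a span of polynomials.
Let `F` be a field, `q` a natural number, `S` a finite subset of `F^q`, and `B` a finite
set of polynomials in `F[x_1,...,x_q]`. Then there exists `S' ⊆ S` with `|S'| ≤ |B|`
such that for every polynomial `p` in the `F`-linear span of `B`, if `p` does not vanish
on some `x ∈ S`, then `p` does not vanish on some `x' ∈ S'`. -/
theorem stmt_0 {F : Type*} [Field F] (q : ℕ)
    (S : Finset (Fin q → F)) (B : Finset (MvPolynomial (Fin q) F)) :
    ∃ S' ⊆ S, S'.card ≤ B.card ∧
      ∀ p ∈ Submodule.span F (B : Set (MvPolynomial (Fin q) F)),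
        (∃ x ∈ S, MvPolynomial.eval x p ≠ 0) →
        ∃ x' ∈ S', MvPolynomial.eval x' p ≠ 0 := by
  exact_mod_cast stmt_0_general (S : Set (Fin q → F)) B
end

section
/- Let F be a field, q and d natural numbers, and S a finite subset of F^q. Then there exists a subset S' ⊆ S with |S'| ≤ binomial(q+d, d) such that for every polynomial p in F[x_1,...,x_q] of total degree at most d, if p(x) ≠ 0 for some x ∈ S, then p(x') ≠ 0 for some x' ∈ S'. -/
/-!
Evaluation at a point is a linear functional on the space of polynomials of total degree at most
`d`, whose dimension is `(q + d).choose d`. Choose `S'` so that the evaluations at its points form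
a basis of the span of the evaluations at the points of `S`: a polynomial killed by that basis is
killed by the whole span, so it vanishes on `S`.
-/

open Finset Module Submodule

theorem exists_finset_card_le_finrank_span_image_eq {ι K V : Type*} [DivisionRing K]
    [AddCommGroup V] [Module K V] [Module.Finite K V] (v : ι → V) (s : Set ι) :
    ∃ t : Finset ι, ↑t ⊆ s ∧ #t ≤ finrank K V ∧ span K (v '' t) = span K (v '' s) := by
  obtain ⟨b, hbs, -, hsb, hb⟩ := exists_linearIndepOn_extension (linearIndepOn_empty K v)
    (Set.empty_subset s)
  have hfin : Finite b := LinearIndependent.finite hb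
  lift b to Finset ι using hfin
  refine ⟨b, hbs, ?_, le_antisymm (span_mono (Set.image_mono hbs)) (span_le.2 hsb)⟩
  simpa only [SetLike.coe_sort_coe, Fintype.card_coe] using hb.fintype_card_le_finrank

theorem exists_finset_card_le_finrank_forall_dual_apply_ne_zero {ι K V : Type*} [Field K]
    [AddCommGroup V] [Module K V] [Module.Finite K V] (φ : ι → Dual K V) (s : Set ι) :
    ∃ t : Finset ι, ↑t ⊆ s ∧ #t ≤ finrank K V ∧
      ∀ p : V, (∃ i ∈ s, φ i p ≠ 0) → ∃ i ∈ t, φ i p ≠ 0 := by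
  obtain ⟨t, hts, hcard, hspan⟩ := exists_finset_card_le_finrank_span_image_eq (K := K) φ s
  refine ⟨t, hts, hcard.trans_eq Subspace.dual_finrank_eq, fun p => ?_⟩
  contrapose!
  intro hp i hi
  have hker : span K (φ '' t) ≤ LinearMap.ker (Dual.eval K V p) :=
    span_le.2 (Set.forall_mem_image.2 hp)
  exact hker (hspan ▸ subset_span (Set.mem_image_of_mem φ hi))

theorem ncard_setOf_finsupp_degree_le (σ : Type*) [Fintype σ] (d : ℕ) :
    {m : σ →₀ ℕ | m.degree ≤ d}.ncard = (Fintype.card σ + d).choose d := by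
  classical
  have hunion : {m : σ →₀ ℕ | m.degree ≤ d} =
      (range (d + 1)).biUnion fun n => finsuppAntidiag (univ : Finset σ) n := by
    ext m
    simp [Finsupp.degree_eq_sum]
  have hdisj : Set.PairwiseDisjoint (range (d + 1) : Set ℕ)
      fun n => finsuppAntidiag (univ : Finset σ) n := by
    refine fun k _ n _ hkn => disjoint_left.2 fun m hk hn => hkn ?_
    rw [← (mem_finsuppAntidiag.1 hk).1, (mem_finsuppAntidiag.1 hn).1]
  calc {m : σ →₀ ℕ | m.degree ≤ d}.ncard
      = ∑ n ∈ range (d + 1), #(finsuppAntidiag (univ : Finset σ) n) := by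
        rw [hunion, Set.ncard_coe_finset, card_biUnion hdisj]
    _ = ∑ n ∈ range (d + 1), (Fintype.card σ).multichoose n := by
        simp only [card_finsuppAntidiag_nat_eq_multichoose, card_univ]
    _ = (Fintype.card σ + d).choose d := by
        rw [Nat.sum_range_multichoose, add_comm, Nat.choose_symm_add]

theorem finrank_restrictTotalDegree (σ R : Type*) [Fintype σ] [CommSemiring R]
    [StrongRankCondition R] (d : ℕ) :
    finrank R (MvPolynomial.restrictTotalDegree σ R d) = (Fintype.card σ + d).choose d :=
  (finrank_eq_nat_card_basis (MvPolynomial.basisRestrictSupport R _)).trans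
    (ncard_setOf_finsupp_degree_le σ d)

theorem stmt_1_general {σ F : Type*} [Fintype σ] [Field F] (d : ℕ) (S : Set (σ → F)) :
    ∃ S' : Finset (σ → F), ↑S' ⊆ S ∧ #S' ≤ (Fintype.card σ + d).choose d ∧
      ∀ p : MvPolynomial σ F, p.totalDegree ≤ d →
        (∃ x ∈ S, MvPolynomial.eval x p ≠ 0) → ∃ x' ∈ S', MvPolynomial.eval x' p ≠ 0 := by
  let evalAt (x : σ → F) : Dual F (MvPolynomial.restrictTotalDegree σ F d) :=
    (MvPolynomial.aeval x).toLinearMap.domRestrict _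
  obtain ⟨S', hS', hcard, hne⟩ := exists_finset_card_le_finrank_forall_dual_apply_ne_zero evalAt S
  refine ⟨S', hS', hcard.trans_eq (finrank_restrictTotalDegree σ F d), fun p hp => ?_⟩
  exact hne ⟨p, (MvPolynomial.mem_restrictTotalDegree σ d p).2 hp⟩

/-- Representative set for bounded-degree sieving polynomials.
Let `F` be a field, `q, d` natural numbers, `S` a finite subset of `F^q`. Then there is
`S' ⊆ S` with `|S'| ≤ C(q+d, d)` such that for every polynomial of total degree at most
`d`, if it does not vanish on some `x ∈ S`, then it does not vanish on some `x' ∈ S'`. -/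
theorem stmt_1 {F : Type*} [Field F] (q d : ℕ) (S : Finset (Fin q → F)) :
    ∃ S' ⊆ S, S'.card ≤ (q + d).choose d ∧
      ∀ p : MvPolynomial (Fin q) F, p.totalDegree ≤ d →
        (∃ x ∈ S, MvPolynomial.eval x p ≠ 0) →
        ∃ x' ∈ S', MvPolynomial.eval x' p ≠ 0 := by
  simpa only [coe_subset, mem_coe, Fintype.card_fin] using
    stmt_1_general d (S : Set (Fin q → F))
end

section
/- Let F be a field, q a natural number, S a finite subset of F^q equipped with a linear order ⪯, and B a finite set of polynomials in F[x_1,...,x_q]. Then there exists a subset S' ⊆ S with |S'| ≤ |B| such that for every polynomial p in the F-linear span of B, either p vanishes on all of S, or there exists x ∈ S' with p(x) ≠ 0 and x ⪯ x' for every x' ∈ S with p(x') ≠ 0. -/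
/-!
For each `x ∈ S` that is the least non-root in `S` of some polynomial in the span of `B`, choose
such a polynomial. The matrix of values of the chosen polynomials at these points is triangular
with nonzero diagonal, so the chosen polynomials are linearly independent; hence there are at most
`|B|` such points, and all of them can be put into `S'`.
-/

/-- The linear order bundled from an unbundled relation; comparisons are decided classically. -/
noncomputable abbrev linearOrderOfIsLinearOrder {α : Type*} (r : α → α → Prop)
    [IsLinearOrder α r] : LinearOrder α where
  le := r
  le_refl := refl_of r
  le_trans _ _ _ := trans_of r
  le_antisymm _ _ := antisymm_of r
  le_total := total_of r
  toDecidableLE := Classical.decRel r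

section

variable {ι R V M : Type*} [LinearOrder ι] [Ring R] [AddCommGroup V] [Module R V]
  [AddCommGroup M] [Module R M]

theorem linearIndependent_of_triangular [NoZeroDivisors R] [Module.IsTorsionFree R M]
    (φ : ι → V →ₗ[R] M) {v : ι → V} (h_diag : ∀ i, φ i (v i) ≠ 0)
    (h_tri : ∀ i j, i < j → φ i (v j) = 0) : LinearIndependent R v := by
  rw [linearIndependent_iff]
  intro c hc
  by_contra hne
  obtain ⟨i, hi, hmin⟩ := c.support.exists_min_image id (Finsupp.support_nonempty_iff.2 hne)
  have h_eval : φ i (Finsupp.linearCombination R v c) = c i • φ i (v i) := by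
    rw [Finsupp.linearCombination_apply, Finsupp.sum, map_sum, Finset.sum_eq_single_of_mem i hi,
      map_smul]
    intro j hj hji
    rw [map_smul, h_tri i j (lt_of_le_of_ne (hmin j hj) hji.symm), smul_zero]
  rw [hc, map_zero, eq_comm, smul_eq_zero] at h_eval
  exact h_eval.elim (Finsupp.mem_support_iff.1 hi) (h_diag i)

/-- The pivots of a submodule `W` with respect to linear maps `φ i`, as in row echelon form: the
indices `i` at which some `v ∈ W` has its first nonzero coordinate `φ i v`. -/
def pivots (φ : ι → V →ₗ[R] M) (W : Submodule R V) : Set ι :=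
  {i | ∃ v ∈ W, IsLeast {j | φ j v ≠ 0} i}

theorem encard_pivots_span_le [NoZeroDivisors R] [StrongRankCondition R] [Module.IsTorsionFree R M]
    (φ : ι → V →ₗ[R] M) (B : Finset V) :
    (pivots φ (Submodule.span R (B : Set V))).encard ≤ B.card := by
  choose v hv_mem hv_least using fun i : pivots φ (Submodule.span R (B : Set V)) ↦ i.2
  have h_indep : LinearIndependent R v :=
    linearIndependent_of_triangular (fun i : pivots φ _ ↦ φ i) (fun i ↦ (hv_least i).1)
      fun i j hij ↦ not_not.1 fun h ↦ hij.not_ge ((hv_least j).2 h)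
  have h_card := linearIndependent_le_span' v h_indep (B : Set V) (Set.range_subset_iff.2 hv_mem)
  rw [Set.encard, ENat.card]
  simpa using Cardinal.toENat_le_natCast.2 h_card

theorem stmt_2_general [WellFoundedLT ι] [NoZeroDivisors R] [StrongRankCondition R]
    [Module.IsTorsionFree R M] (φ : ι → V →ₗ[R] M) (B : Finset V) :
    ∃ T : Finset ι, T.card ≤ B.card ∧ ∀ v ∈ Submodule.span R (B : Set V),
      (∀ i, φ i v = 0) ∨ ∃ i ∈ T, IsLeast {j | φ j v ≠ 0} i := by
  obtain ⟨h_fin, h_card⟩ := Set.encard_le_coe_iff_finite_ncard_le.1 (encard_pivots_span_le φ B)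
  refine ⟨h_fin.toFinset, by rwa [← Set.ncard_eq_toFinset_card _ h_fin], fun v hv ↦ ?_⟩
  refine or_iff_not_imp_left.2 fun h_ne ↦ ?_
  have h_nonempty : {j | φ j v ≠ 0}.Nonempty := not_forall.1 h_ne
  obtain ⟨i, hi⟩ : ∃ i, IsLeast {j | φ j v ≠ 0} i :=
    ⟨_, wellFounded_lt.min_mem _ h_nonempty, fun _ ↦ wellFounded_lt.min_le⟩
  exact ⟨i, h_fin.mem_toFinset.2 ⟨v, hv, hi⟩, hi⟩

end

/-- Weighted/ordered representative set for a span of polynomials.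
Let `F` be a field, `q` a natural number, `S` a finite subset of `F^q` equipped with a
linear order `le`, and `B` a finite set of polynomials. Then there exists `S' ⊆ S` with
`|S'| ≤ |B|` such that for every polynomial `p` in the `F`-linear span of `B`, either `p`
vanishes on all of `S`, or some `x ∈ S'` has `p(x) ≠ 0` and `x ⪯ x'` for every `x' ∈ S`
with `p(x') ≠ 0`. -/
theorem stmt_2 {F : Type*} [Field F] (q : ℕ)
    (S : Finset (Fin q → F)) (B : Finset (MvPolynomial (Fin q) F))
    (le : {x // x ∈ S} → {x // x ∈ S} → Prop)
    (hle : IsLinearOrder {x // x ∈ S} le) :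
    ∃ S' ⊆ S, S'.card ≤ B.card ∧
      ∀ p ∈ Submodule.span F (B : Set (MvPolynomial (Fin q) F)),
        (∀ x ∈ S, MvPolynomial.eval x p = 0) ∨
        ∃ x, ∃ hx : x ∈ S, x ∈ S' ∧ MvPolynomial.eval x p ≠ 0 ∧
          ∀ x', ∀ hx' : x' ∈ S, MvPolynomial.eval x' p ≠ 0 → le ⟨x, hx⟩ ⟨x', hx'⟩ := by
  let := linearOrderOfIsLinearOrder le
  obtain ⟨T, hT, h⟩ := stmt_2_general (fun x : S ↦ (MvPolynomial.aeval (R := F) x.1).toLinearMap) B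
  refine ⟨T.map (.subtype _), Finset.map_subtype_subset T, by simpa using hT, fun p hp ↦ ?_⟩
  obtain h_zero | ⟨x, hxT, hx, hmin⟩ := h p hp
  · exact .inl fun x hx ↦ h_zero ⟨x, hx⟩
  · exact .inr ⟨x, x.2, Finset.mem_map_of_mem _ hxT, hx, fun x' hx' ↦ @hmin ⟨x', hx'⟩⟩
end

section
/- Let F be a field, let A be a matrix over F with k rows whose columns are indexed by a finite set U, and suppose A has rank k. Let q ≤ k and let 𝒮 be a family of q-element subsets of U. Then there exists a subfamily 𝒮' ⊆ 𝒮 with |𝒮'| ≤ binomial(k, q) such that for every set X ⊆ U with |X| = k − q: if there exists Y ∈ 𝒮 with X ∩ Y = ∅ and the columns indexed by X ∪ Y linearly independent over F, then there exists Y' ∈ 𝒮' with X ∩ Y' = ∅ and the columns indexed by X ∪ Y' linearly independent over F. -/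
/-! Represent a set `Y` of vectors by their wedge product. The wedges of `q`-element sets
lie in `⋀^q V`, of dimension `C(dim V, q)`, so at most that many members of `𝒮` have wedges spanning
all those coming from `𝒮`. For fixed `X`, the linear map `ω ↦ (⋀ X) ∧ ω` is nonzero at `⋀ Y` exactly
when `Y` is disjoint from `X` and the vectors indexed by `X ∪ Y` are independent; a linear map that
vanishes on the chosen wedges vanishes on all of them. -/

theorem exists_finset_card_le_finrank_image_subset_span {K M ι : Type*} [DivisionRing K]
    [AddCommGroup M] [Module K M] (W : Submodule K M) [FiniteDimensional K W] {w : ι → M}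
    {s : Set ι} (hw : Set.MapsTo w s W) :
    ∃ t : Finset ι, ↑t ⊆ s ∧ t.card ≤ Module.finrank K W ∧
      w '' s ⊆ Submodule.span K (w '' t) := by
  classical
  have span_le : Submodule.span K (w '' s) ≤ W := Submodule.span_le.2 hw.image_subset
  have : FiniteDimensional K (Submodule.span K (w '' s)) :=
    Submodule.finiteDimensional_of_le span_le
  obtain ⟨b, hbs, hcard, hspan, -⟩ := Submodule.exists_finset_span_eq_linearIndepOn K (w '' s)
  obtain ⟨t, hts, hinj, rfl⟩ := Finset.exists_subset_injOn_image_eq_of_surjOn s b hbs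
  refine ⟨t, hts, ?_, ?_⟩
  · rw [← Finset.card_image_of_injOn hinj, hcard]
    exact Submodule.finrank_mono span_le
  · rw [← Finset.coe_image, hspan]
    exact Submodule.subset_span

theorem exists_apply_ne_zero_of_mem_span_image {R M N ι : Type*} [Semiring R] [AddCommMonoid M]
    [AddCommMonoid N] [Module R M] [Module R N] (L : M →ₗ[R] N) {w : ι → M} {t : Set ι} {x : M}
    (hx : x ∈ Submodule.span R (w '' t)) (hLx : L x ≠ 0) : ∃ i ∈ t, L (w i) ≠ 0 := by
  contrapose! hLx
  have span_le_ker : Submodule.span R (w '' t) ≤ LinearMap.ker L :=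
    Submodule.span_le.2 (Set.image_subset_iff.2 hLx)
  exact span_le_ker hx

theorem linearIndependent_comp_list_get_iff {R M U : Type*} [Semiring R] [Nontrivial R]
    [AddCommMonoid M] [Module R M] {v : U → M} {l : List U} :
    LinearIndependent R (v ∘ l.get) ↔ l.Nodup ∧ LinearIndepOn R v {u | u ∈ l} := by
  rw [← Set.range_list_get, List.nodup_iff_injective_get]
  refine ⟨fun h ↦ ?_, fun ⟨hinj, h⟩ ↦ (linearIndepOn_range_iff hinj v).1 h⟩
  have hinj : Function.Injective l.get := h.injective.of_comp
  exact ⟨hinj, (linearIndepOn_range_iff hinj v).2 h⟩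

section ListWedge

variable {R M U : Type*} [CommRing R] [AddCommGroup M] [Module R M]

variable (R) in
/-- The wedge product of the vectors `v u`, for `u` running through the list `l`. A finite set is
represented by the wedge of its `toList`, whose arbitrary order only affects the sign. -/
noncomputable def listWedge (v : U → M) (l : List U) : ExteriorAlgebra R M :=
  (l.map (ExteriorAlgebra.ι R ∘ v)).prod

variable (v : U → M)

theorem listWedge_append (l₁ l₂ : List U) :
    listWedge R v (l₁ ++ l₂) = listWedge R v l₁ * listWedge R v l₂ := by
  simp [listWedge]

theorem listWedge_eq_ιMulti (l : List U) :
    listWedge R v l = ExteriorAlgebra.ιMulti R l.length (v ∘ l.get) := by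
  conv_lhs => rw [listWedge, ← List.ofFn_get l, List.map_ofFn]
  rfl

theorem listWedge_mem_exteriorPower (l : List U) : listWedge R v l ∈ ⋀[R]^l.length M := by
  rw [listWedge_eq_ιMulti]
  exact ExteriorAlgebra.ιMulti_range R _ ⟨_, rfl⟩

end ListWedge

section Field

variable {F V U : Type*} [Field F] [AddCommGroup V] [Module F V]

theorem exteriorAlgebra_ιMulti_ne_zero_iff {n : ℕ} {v : Fin n → V} :
    ExteriorAlgebra.ιMulti F n v ≠ 0 ↔ LinearIndependent F v := by
  refine ⟨not_imp_comm.1 ((ExteriorAlgebra.ιMulti F n).map_linearDependent v), fun hv ↦ ?_⟩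
  -- `ιMulti F n v` is the member of this family indexed by the full subset of `Fin n`.
  have hne := (exteriorPower.ιMulti_family_linearIndependent_field (n := n) hv).ne_zero
    (Set.powersetCard.ofFinEmbEquiv (RelEmbedding.refl _))
  simpa [exteriorPower.ιMulti_family, ← Submodule.coe_eq_zero] using hne

variable (v : U → V)

theorem listWedge_ne_zero_iff (l : List U) :
    listWedge F v l ≠ 0 ↔ l.Nodup ∧ LinearIndepOn F v {u | u ∈ l} := by
  rw [listWedge_eq_ιMulti, exteriorAlgebra_ιMulti_ne_zero_iff, linearIndependent_comp_list_get_iff]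

theorem listWedge_toList_mul_toList_ne_zero_iff [DecidableEq U] (X Y : Finset U) :
    listWedge F v X.toList * listWedge F v Y.toList ≠ 0 ↔
      X ∩ Y = ∅ ∧ LinearIndepOn F v (X ∪ Y : Finset U) := by
  have nodup_iff : (X.toList ++ Y.toList).Nodup ↔ X ∩ Y = ∅ := by
    simp [List.nodup_append', X.nodup_toList, Y.nodup_toList, List.disjoint_left,
      ← Finset.disjoint_iff_inter_eq_empty, Finset.disjoint_left]
  have mem_eq : {u | u ∈ X.toList ++ Y.toList} = ((X ∪ Y : Finset U) : Set U) := by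
    ext u
    simp
  rw [← listWedge_append, listWedge_ne_zero_iff, nodup_iff, mem_eq]

end Field

theorem stmt_3_general {F V U : Type*} [Field F] [AddCommGroup V] [Module F V]
    [FiniteDimensional F V] [DecidableEq U] (v : U → V) (q : ℕ) (𝒮 : Set (Finset U))
    (h𝒮 : ∀ Y ∈ 𝒮, Y.card = q) :
    ∃ 𝒮' : Finset (Finset U), ↑𝒮' ⊆ 𝒮 ∧ 𝒮'.card ≤ (Module.finrank F V).choose q ∧
      ∀ X : Finset U,
        (∃ Y ∈ 𝒮, X ∩ Y = ∅ ∧ LinearIndepOn F v (X ∪ Y : Finset U)) →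
        ∃ Y' ∈ 𝒮', X ∩ Y' = ∅ ∧ LinearIndepOn F v (X ∪ Y' : Finset U) := by
  let wedge (Y : Finset U) : ExteriorAlgebra F V := listWedge F v Y.toList
  have wedge_mem : Set.MapsTo wedge 𝒮 (⋀[F]^q V) := fun Y hY ↦ by
    rw [← h𝒮 Y hY, ← Y.length_toList]
    exact listWedge_mem_exteriorPower v Y.toList
  obtain ⟨𝒮', hsub, hcard, hspan⟩ :=
    exists_finset_card_le_finrank_image_subset_span (⋀[F]^q V) wedge_mem
  refine ⟨𝒮', hsub, hcard.trans_eq (exteriorPower.finrank_eq F q), ?_⟩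
  rintro X ⟨Y, hY, hXY⟩
  have hne : LinearMap.mulLeft F (wedge X) (wedge Y) ≠ 0 :=
    (listWedge_toList_mul_toList_ne_zero_iff v X Y).2 hXY
  obtain ⟨Y', hY', hne'⟩ :=
    exists_apply_ne_zero_of_mem_span_image _ (hspan (Set.mem_image_of_mem wedge hY)) hne
  exact ⟨Y', hY', (listWedge_toList_mul_toList_ne_zero_iff v X Y').1 hne'⟩

/-- Representative sets lemma for linear matroids, linear-algebra form.
Let `A` be a `k × U` matrix over a field `F` of rank `k`, `q ≤ k`, and `𝒮` a family of
`q`-element subsets of `U`. Then there exists `𝒮' ⊆ 𝒮` with `|𝒮'| ≤ C(k, q)` such that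
for every `X ⊆ U` with `|X| = k − q`: if some `Y ∈ 𝒮` is disjoint from `X` with the
columns `X ∪ Y` linearly independent, then some `Y' ∈ 𝒮'` has the same property. -/
theorem stmt_3 {F : Type*} [Field F] {U : Type*} [Fintype U] [DecidableEq U]
    (k q : ℕ) (hqk : q ≤ k) (A : Matrix (Fin k) U F) (hrank : A.rank = k)
    (𝒮 : Finset (Finset U)) (h𝒮 : ∀ Y ∈ 𝒮, Y.card = q) :
    ∃ 𝒮' ⊆ 𝒮, 𝒮'.card ≤ k.choose q ∧
      ∀ X : Finset U, X.card = k - q →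
        (∃ Y ∈ 𝒮, X ∩ Y = ∅ ∧
          LinearIndependent F (fun u : ↥(X ∪ Y) => fun i => A i (u : U))) →
        ∃ Y' ∈ 𝒮', X ∩ Y' = ∅ ∧
          LinearIndependent F (fun u : ↥(X ∪ Y') => fun i => A i (u : U)) := by
  obtain ⟨𝒮', hsub, hcard, hrep⟩ := stmt_3_general (F := F) (fun u i ↦ A i u) q 𝒮 h𝒮
  exact ⟨𝒮', hsub, by simpa using hcard, fun X _ ↦ hrep X⟩
end

section
/- Let F be a field, S a finite set, ψ₁ : S → F^{r₁} and ψ₂ : S → F^{r₂} maps, P₁, P₂ ⊆ S subsets, and p₁ ∈ F[x_1,...,x_{r₁}], p₂ ∈ F[x_1,...,x_{r₂}] polynomials of total degree at most d such that for all x ∈ S: p₁(ψ₁(x)) ≠ 0 if and only if x ∈ P₁, and p₂(ψ₂(x)) ≠ 0 if and only if x ∈ P₂. If |F| > |S|, then there exists z ∈ F such that for all x ∈ S: p₁(ψ₁(x)) + z·p₂(ψ₂(x)) ≠ 0 if and only if x ∈ P₁ ∪ P₂. -/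
universe u v

section

variable {R : Type u} {ι : Type v} [NonUnitalNonAssocSemiring R] [IsLeftCancelAdd R]
  [IsRightCancelMulZero R]

theorem exists_add_mul_ne_zero_of_ne_zero (f g : ι → R)
    (hcard : Cardinal.lift.{u} (Cardinal.mk ι) < Cardinal.lift.{v} (Cardinal.mk R)) :
    ∃ z : R, ∀ i, g i ≠ 0 → f i + z * g i ≠ 0 := by
  by_contra! hbad
  choose i hg hzero using hbad
  -- An index rules out at most one `z`, so choosing an index for each `z` embeds `R` into `ι`.
  have hinj : Function.Injective i := by
    intro z w hzw
    have hsum : f (i z) + z * g (i z) = f (i z) + w * g (i z) := by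
      rw [hzero z, hzw, hzero w]
    exact mul_right_cancel₀ (hg z) (add_left_cancel hsum)
  exact hcard.not_ge (Cardinal.lift_mk_le_lift_mk_of_injective hinj)

theorem exists_add_mul_ne_zero_iff (f g : ι → R)
    (hcard : Cardinal.lift.{u} (Cardinal.mk ι) < Cardinal.lift.{v} (Cardinal.mk R)) :
    ∃ z : R, ∀ i, f i + z * g i ≠ 0 ↔ f i ≠ 0 ∨ g i ≠ 0 := by
  obtain ⟨z, hz⟩ := exists_add_mul_ne_zero_of_ne_zero f g hcard
  refine ⟨z, fun i => ?_⟩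
  by_cases hg : g i = 0
  · simp [hg]
  · exact iff_of_true (hz i hg) (Or.inr hg)

end

theorem stmt_4_general {R : Type u} {α : Type v} {σ τ : Type*} [CommSemiring R]
    [IsLeftCancelAdd R] [IsRightCancelMulZero R] {S P₁ P₂ : Set α} {ψ₁ : α → σ → R} {ψ₂ : α → τ → R}
    {p₁ : MvPolynomial σ R} {p₂ : MvPolynomial τ R}
    (h₁ : ∀ x ∈ S, (MvPolynomial.eval (ψ₁ x) p₁ ≠ 0 ↔ x ∈ P₁))
    (h₂ : ∀ x ∈ S, (MvPolynomial.eval (ψ₂ x) p₂ ≠ 0 ↔ x ∈ P₂))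
    (hcard : Cardinal.lift.{u} (Cardinal.mk S) < Cardinal.lift.{v} (Cardinal.mk R)) :
    ∃ z : R, ∀ x ∈ S,
      (MvPolynomial.eval (ψ₁ x) p₁ + z * MvPolynomial.eval (ψ₂ x) p₂ ≠ 0 ↔
        x ∈ P₁ ∪ P₂) := by
  obtain ⟨z, hz⟩ := exists_add_mul_ne_zero_iff
    (fun x : S => MvPolynomial.eval (ψ₁ x) p₁) (fun x : S => MvPolynomial.eval (ψ₂ x) p₂) hcard
  exact ⟨z, fun x hx => (hz ⟨x, hx⟩).trans (or_congr (h₁ x hx) (h₂ x hx))⟩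

/-- Union of two sieving polynomial properties.
Given sieving polynomials `p₁, p₂` (of total degree at most `d`, with respect to maps
`ψ₁, ψ₂`) for properties `P₁, P₂ ⊆ S`, if `|F| > |S|` then there is a constant `z ∈ F`
such that `p₁(ψ₁(x)) + z·p₂(ψ₂(x)) ≠ 0` exactly when `x ∈ P₁ ∪ P₂`. -/
theorem stmt_4 {F : Type*} [Field F] {α : Type*} [DecidableEq α] (r₁ r₂ d : ℕ)
    (S : Finset α) (ψ₁ : α → Fin r₁ → F) (ψ₂ : α → Fin r₂ → F)
    (P₁ P₂ : Finset α) (hP₁ : P₁ ⊆ S) (hP₂ : P₂ ⊆ S)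
    (p₁ : MvPolynomial (Fin r₁) F) (p₂ : MvPolynomial (Fin r₂) F)
    (hd₁ : p₁.totalDegree ≤ d) (hd₂ : p₂.totalDegree ≤ d)
    (h₁ : ∀ x ∈ S, (MvPolynomial.eval (ψ₁ x) p₁ ≠ 0 ↔ x ∈ P₁))
    (h₂ : ∀ x ∈ S, (MvPolynomial.eval (ψ₂ x) p₂ ≠ 0 ↔ x ∈ P₂))
    (hF : (S.card : Cardinal) < Cardinal.mk F) :
    ∃ z : F, ∀ x ∈ S,
      (MvPolynomial.eval (ψ₁ x) p₁ + z * MvPolynomial.eval (ψ₂ x) p₂ ≠ 0 ↔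
        x ∈ P₁ ∪ P₂) := by
  simpa using stmt_4_general (S := (S : Set α)) (P₁ := (P₁ : Set α)) (P₂ := (P₂ : Set α))
    h₁ h₂ (by simpa using hF)
end

section
/- Let F be a field, V a finite set, and A a skew-symmetric matrix over F indexed by V. Let T ⊆ V with |T| = k, let q be a natural number, and let 𝒮 be a family of q-element subsets of V. Then there exists a subfamily 𝒮' ⊆ 𝒮 with |𝒮'| ≤ binomial(k·q + q·(q−1)/2 + q, q) such that for every X ⊆ T: if some Y ∈ 𝒮 extends X with respect to A, then some Y' ∈ 𝒮' extends X with respect to A. -/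
/-- The principal submatrix `A[S]` of a matrix `A` indexed by `V`, for `S ⊆ V`. -/
def principalSub {V F : Type*} (A : Matrix V V F) (S : Finset V) : Matrix ↥S ↥S F :=
  A.submatrix (fun x => (x : V)) (fun x => (x : V))

/-- `Y` extends `X` with respect to `A`: `X ∩ Y = ∅` and `A[X ∪ Y]` is nonsingular. -/
def ExtendsIn {V F : Type*} [DecidableEq V] [Field F] (A : Matrix V V F)
    (X Y : Finset V) : Prop :=
  X ∩ Y = ∅ ∧ (principalSub A (X ∪ Y)).det ≠ 0

/-!
Replace the block of `A` outside `T` by indeterminates: `k * q` entries between `T` and `q` new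
indices, and one for each pair of new indices. For `X ⊆ T` the determinant of the principal
submatrix on `X` and the new indices has total degree at most `2 * q`, and it is the square of a
polynomial `p` (the Pfaffian) of total degree at most `q`. A set `Y` extends `X` exactly when `p`
does not vanish at the point formed by the corresponding entries of `A`, and this point depends on
`Y` and `T` only. Evaluations at points of polynomials of degree at most `q` in `N` variables span
a space of dimension at most `(N + q).choose q`, so a basis among the evaluations at the points of
`𝒮` detects every `p` that does not vanish at some of them.
-/

open Matrix MvPolynomial

/-- A square matrix which is skew-symmetric with zero diagonal, i.e. the matrix of an alternating
bilinear form. The second condition follows from the first only away from characteristic two. -/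
structure IsAlternatingMatrix {n R : Type*} [Ring R] (M : Matrix n n R) : Prop where
  apply_eq_neg : ∀ i j, M i j = -M j i
  diag_eq_zero : ∀ i, M i i = 0

namespace IsAlternatingMatrix

section Ring

variable {m n R : Type*} [Ring R] {M : Matrix n n R}

theorem submatrix (hM : IsAlternatingMatrix M) (f : m → n) :
    IsAlternatingMatrix (M.submatrix f f) :=
  ⟨fun i j => hM.apply_eq_neg (f i) (f j), fun i => hM.diag_eq_zero (f i)⟩

theorem map {S : Type*} [Ring S] (hM : IsAlternatingMatrix M) (f : R →+* S) :
    IsAlternatingMatrix (M.map f) where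
  apply_eq_neg i j := by rw [map_apply, map_apply, hM.apply_eq_neg, map_neg]
  diag_eq_zero i := by rw [map_apply, hM.diag_eq_zero, map_zero]

theorem transpose_eq_neg (hM : IsAlternatingMatrix M) : Mᵀ = -M :=
  Matrix.ext fun i j => hM.apply_eq_neg j i

theorem sub_transpose (M : Matrix n n R) : IsAlternatingMatrix (M - Mᵀ) where
  apply_eq_neg _ _ := (neg_sub _ _).symm
  diag_eq_zero _ := sub_self _

theorem fromBlocks {A : Matrix m m R} {D : Matrix n n R} (hA : IsAlternatingMatrix A)
    (hD : IsAlternatingMatrix D) (B : Matrix m n R) :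
    IsAlternatingMatrix (fromBlocks A B (-Bᵀ) D) where
  apply_eq_neg := by
    rintro (i | i) (j | j)
    · exact hA.apply_eq_neg i j
    · exact (neg_neg _).symm
    · rfl
    · exact hD.apply_eq_neg i j
  diag_eq_zero := by
    rintro (i | i)
    · exact hA.diag_eq_zero i
    · exact hD.diag_eq_zero i

end Ring

section CommRing

variable {m n R : Type*} [CommRing R]

theorem dotProduct_mulVec_self [Fintype n] {M : Matrix n n R} (hM : IsAlternatingMatrix M)
    (x : n → R) : x ⬝ᵥ M *ᵥ x = 0 := by
  simp only [dotProduct, mulVec, Finset.mul_sum, ← Fintype.sum_prod_type']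
  refine Finset.sum_involution (fun p _ => p.swap) (fun p _ => ?_) (fun p _ hp hswap => hp ?_)
    (fun _ _ => Finset.mem_univ _) (fun _ _ => Prod.swap_swap _)
  · rw [Prod.fst_swap, Prod.snd_swap, hM.apply_eq_neg p.2 p.1]
    ring
  · have : p.2 = p.1 := congrArg Prod.fst hswap
    rw [this, hM.diag_eq_zero, zero_mul, mul_zero]

theorem transpose_mul_mul [Fintype n] {M : Matrix n n R} (hM : IsAlternatingMatrix M)
    (P : Matrix n m R) :
    IsAlternatingMatrix (Pᵀ * M * P) where
  apply_eq_neg i j := by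
    rw [← transpose_apply (Pᵀ * M * P), ← neg_apply]
    simp only [transpose_mul, transpose_transpose, hM.transpose_eq_neg, Matrix.mul_assoc,
      Matrix.mul_neg, Matrix.neg_mul]
  diag_eq_zero i := by
    rw [Matrix.mul_assoc, Matrix.mul_apply_eq_vecMul]
    exact hM.dotProduct_mulVec_self (P.col i)

theorem schurComplement [Fintype m] [DecidableEq m] [Finite n] {A : Matrix m m R}
    [Invertible A] {B : Matrix m n R} {C : Matrix n m R} {D : Matrix n n R}
    (hM : IsAlternatingMatrix (Matrix.fromBlocks A B C D)) :
    IsAlternatingMatrix (D - C * ⅟A * B) := by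
  classical
  have := Fintype.ofFinite n
  let P : Matrix (m ⊕ n) n R := fromRows (-(⅟A * B)) 1
  have hconj : Pᵀ * Matrix.fromBlocks A B C D * P = D - C * ⅟A * B := by
    rw [Matrix.mul_assoc, fromBlocks_mul_fromRows, transpose_fromRows, fromCols_mul_fromRows]
    simp [Matrix.mul_assoc, sub_eq_neg_add]
  exact hconj ▸ hM.transpose_mul_mul P

end CommRing

section Determinant

theorem det_fin_two_eq_mul_self {R : Type*} [CommRing R] {M : Matrix (Fin 2) (Fin 2) R}
    (hM : IsAlternatingMatrix M) : M.det = M 0 1 * M 0 1 := by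
  rw [det_fin_two, hM.diag_eq_zero 0, hM.apply_eq_neg 1 0]
  ring

theorem isSquare_det_of_field {K n : Type*} [Field K] [Fintype n] [DecidableEq n]
    {M : Matrix n n K} (hM : IsAlternatingMatrix M) : IsSquare M.det := by
  induction hn : Fintype.card n using Nat.strong_induction_on generalizing n with
  | _ d ih =>
    by_cases hzero : ∀ a b, M a b = 0
    · obtain rfl : M = 0 := Matrix.ext hzero
      rcases isEmpty_or_nonempty n with _ | _
      · rw [det_isEmpty]
        exact IsSquare.one
      · rw [det_zero]
        exact IsSquare.zero
    · push Not at hzero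
      obtain ⟨a, b, hab⟩ := hzero
      have hpair : Function.Injective ![a, b] := by
        have : a ≠ b := fun h => hab (h ▸ hM.diag_eq_zero a)
        simpa [Function.Injective, Fin.forall_fin_two] using ⟨this, this.symm⟩
      classical
      let e : Fin 2 ⊕ ↥(Set.range ![a, b])ᶜ ≃ n :=
        ((Equiv.ofInjective _ hpair).sumCongr (Equiv.refl _)).trans (Equiv.Set.sumCompl _)
      obtain ⟨A, B, C, D, hblocks⟩ : ∃ A B C D, M.submatrix e e = Matrix.fromBlocks A B C D :=
        ⟨_, _, _, _, (fromBlocks_toBlocks _).symm⟩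
      have hN : IsAlternatingMatrix (Matrix.fromBlocks A B C D) := hblocks ▸ hM.submatrix e
      have hdetA : A.det = M a b * M a b := by
        have hA : IsAlternatingMatrix A := hN.submatrix Sum.inl
        have hA₀₁ : A 0 1 = M a b := (congrFun₂ hblocks (Sum.inl 0) (Sum.inl 1)).symm
        rw [hA.det_fin_two_eq_mul_self, hA₀₁]
      have : Invertible A := invertibleOfIsUnitDet A (by
        rw [hdetA]
        exact (mul_ne_zero hab hab).isUnit)
      have hlt : Fintype.card ↥(Set.range ![a, b])ᶜ < d :=
        hn ▸ Fintype.card_subtype_lt (x := a) (by simp)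
      rw [← det_submatrix_equiv_self e, hblocks, det_fromBlocks₁₁, hdetA]
      exact (IsSquare.mul_self _).mul (ih _ hlt hN.schurComplement rfl)

theorem isSquare_det {R n : Type*} [CommRing R] [IsDomain R] [IsIntegrallyClosed R] [Fintype n]
    [DecidableEq n] {M : Matrix n n R} (hM : IsAlternatingMatrix M) : IsSquare M.det := by
  obtain ⟨x, hx⟩ := (hM.map (algebraMap R (FractionRing R))).isSquare_det_of_field
  rw [← RingHom.mapMatrix_apply, ← RingHom.map_det, ← pow_two] at hx
  obtain ⟨r, rfl⟩ := IsIntegrallyClosed.exists_algebraMap_eq_of_isIntegral_pow two_pos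
    (hx ▸ isIntegral_algebraMap)
  refine ⟨r, IsFractionRing.injective R (FractionRing R) ?_⟩
  rw [hx, pow_two, map_mul]

end Determinant

end IsAlternatingMatrix

theorem totalDegree_det_le {n σ R : Type*} [Fintype n] [DecidableEq n] [CommRing R]
    (M : Matrix n n (MvPolynomial σ R)) (r c : n → ℕ)
    (hM : ∀ i j, (M i j).totalDegree ≤ r i + c j) :
    M.det.totalDegree ≤ ∑ i, r i + ∑ j, c j := by
  rw [det_apply]
  refine totalDegree_finsetSum_le fun σ _ => ?_
  calc (Equiv.Perm.sign σ • ∏ i, M (σ i) i).totalDegree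
      ≤ (∏ i, M (σ i) i).totalDegree := totalDegree_smul_le _ _
    _ ≤ ∑ i, (M (σ i) i).totalDegree := totalDegree_finsetProd _ _
    _ ≤ ∑ i, (r (σ i) + c i) := Finset.sum_le_sum fun i _ => hM (σ i) i
    _ = ∑ i, r i + ∑ j, c j := by rw [Finset.sum_add_distrib, Equiv.sum_comp σ r]

section RestrictTotalDegree

theorem card_finsupp_degree_le (σ : Type*) [Fintype σ] (q : ℕ) :
    Nat.card {n : σ →₀ ℕ | (n.sum fun _ e => e) ≤ q} = (Fintype.card σ + q).choose q := by
  classical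
  -- The slack `q - n.degree` is the multiplicity of the extra point of `Option σ`.
  let e : {n : σ →₀ ℕ | (n.sum fun _ e => e) ≤ q} ≃ {P : Option σ → ℕ // ∑ i, P i = q} :=
    { toFun n := ⟨fun o => o.elim (q - n.1.sum fun _ e => e) n.1, by
        have h : (n.1.sum fun _ e => e) ≤ q := n.2
        simpa [Fintype.sum_option, Finsupp.sum_fintype] using
          Nat.sub_add_cancel (by simpa [Finsupp.sum_fintype] using h)⟩
      invFun P := ⟨Finsupp.equivFunOnFinite.symm fun i => P.1 (some i), by
        simpa [Finsupp.sum_fintype] using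
          (Nat.le_add_left _ _).trans ((Fintype.sum_option P.1).symm.trans P.2).le⟩
      left_inv n := by
        ext i
        rfl
      right_inv P := by
        ext (_ | i)
        · have h := (Fintype.sum_option P.1).symm.trans P.2
          simp only [implies_true, Finsupp.sum_fintype, Finsupp.equivFunOnFinite_symm_apply_apply,
            Finsupp.coe_equivFunOnFinite_symm, Option.elim_none]
          omega
        · rfl }
  rw [Nat.card_congr (e.trans (Sym.equivNatSumOfFintype (Option σ) q).symm),
    Nat.card_eq_fintype_card, Sym.card_sym_eq_choose, Fintype.card_option]
  congr 1
  omega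

theorem finrank_restrictTotalDegree_s5 (σ R : Type*) [Fintype σ] [CommRing R] [Nontrivial R]
    (q : ℕ) :
    Module.finrank R (restrictTotalDegree σ R q) = (Fintype.card σ + q).choose q := by
  rw [← card_finsupp_degree_le]
  exact Module.finrank_eq_nat_card_basis (basisRestrictSupport R _)

theorem exists_finset_span_image_eq_span_range {K M α : Type*} [DivisionRing K] [AddCommGroup M]
    [Module K M] [Module.Finite K M] (v : α → M) :
    ∃ s : Finset α, s.card ≤ Module.finrank K M ∧
      Submodule.span K (v '' s) = Submodule.span K (Set.range v) := by
  obtain ⟨κ, a, ha, hspan, hli⟩ := exists_linearIndependent' K v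
  have := hli.finite
  have := Fintype.ofFinite κ
  refine ⟨Finset.univ.map ⟨a, ha⟩, ?_, ?_⟩
  · simpa using hli.fintype_card_le_finrank
  · rw [← hspan, Set.range_comp]
    simp

theorem exists_finset_forall_eval_eq_zero {α σ K : Type*} [Fintype σ] [Field K] (z : α → σ → K)
    (q : ℕ) :
    ∃ s : Finset α, s.card ≤ (Fintype.card σ + q).choose q ∧
      ∀ p : MvPolynomial σ K, p.totalDegree ≤ q →
        (∀ y ∈ s, eval (z y) p = 0) → ∀ y, eval (z y) p = 0 := by
  let evalAt (y : α) : Module.Dual K (restrictTotalDegree σ K q) :=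
    (aeval (z y)).toLinearMap ∘ₗ (restrictTotalDegree σ K q).subtype
  obtain ⟨s, hcard, hspan⟩ := exists_finset_span_image_eq_span_range (K := K) evalAt
  rw [Subspace.dual_finrank_eq, finrank_restrictTotalDegree_s5] at hcard
  refine ⟨s, hcard, fun p hp hs y => ?_⟩
  let p' : restrictTotalDegree σ K q := ⟨p, (mem_restrictTotalDegree _ _ _).2 hp⟩
  have hevalAt (y : α) : evalAt y p' = eval (z y) p :=
    DFunLike.congr_fun (coe_aeval_eq_eval (z y)) p
  have hle : Submodule.span K (evalAt '' s) ≤ LinearMap.ker (Module.Dual.eval K _ p') := by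
    rw [Submodule.span_le]
    rintro _ ⟨w, hw, rfl⟩
    exact (hevalAt w).trans (hs w hw)
  have hmem : evalAt y ∈ Submodule.span K (evalAt '' s) :=
    hspan ▸ Submodule.subset_span (Set.mem_range_self y)
  exact (hevalAt y).symm.trans (hle hmem)

end RestrictTotalDegree

section GenericBorder

variable (ι β : Type*)

/-- Indices of the indeterminates of `genericBorder`: one for each entry in `ι × β` and one for
each unordered pair of distinct elements of `β`. -/
abbrev BorderIndex : Type _ :=
  (ι × β) ⊕ {a : Sym2 β // ¬a.IsDiag}

theorem card_borderIndex [Fintype ι] [Fintype β] [DecidableEq β] :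
    Fintype.card (BorderIndex ι β) =
      Fintype.card ι * Fintype.card β + (Fintype.card β).choose 2 := by
  rw [Fintype.card_sum, Fintype.card_prod, Sym2.card_subtype_not_diag]

variable {ι β} [LinearOrder β] {R : Type*}

/-- The entries of an alternating matrix outside its `ι × ι` block, as an assignment of values to
the indeterminates of `genericBorder`. The entry taken for a pair is the one above the diagonal. -/
def borderEntries (N : Matrix (ι ⊕ β) (ι ⊕ β) R) : BorderIndex ι β → R
  | Sum.inl (i, b) => N (Sum.inl i) (Sum.inr b)
  | Sum.inr a => N (Sum.inr a.1.inf) (Sum.inr a.1.sup)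

variable [CommRing R]

variable (β R) in
/-- The strictly upper triangular matrix with an indeterminate for each entry above the diagonal. -/
noncomputable def genericStrictUpper : Matrix β β (MvPolynomial (BorderIndex ι β) R) :=
  of fun b c =>
    if h : b < c then X (Sum.inr ⟨s(b, c), mt Sym2.mk_isDiag_iff.1 h.ne⟩) else 0

variable (β) in
/-- The generic alternating matrix whose `ι × ι` block is the given constant matrix `B`. -/
noncomputable def genericBorder (B : Matrix ι ι R) :
    Matrix (ι ⊕ β) (ι ⊕ β) (MvPolynomial (BorderIndex ι β) R) :=
  let Z : Matrix ι β (MvPolynomial (BorderIndex ι β) R) := of fun i b => X (Sum.inl (i, b))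
  fromBlocks (B.map C) Z (-Zᵀ) (genericStrictUpper β R - (genericStrictUpper β R)ᵀ)

theorem IsAlternatingMatrix.genericBorder {B : Matrix ι ι R} (hB : IsAlternatingMatrix B) :
    IsAlternatingMatrix (genericBorder β B) :=
  (hB.map C).fromBlocks (.sub_transpose _) _

theorem map_eval_genericBorder {N : Matrix (ι ⊕ β) (ι ⊕ β) R} (hN : IsAlternatingMatrix N) :
    (genericBorder β N.toBlocks₁₁).map (eval (borderEntries N)) = N := by
  ext (i | b) (j | c)
  · simp [genericBorder, toBlocks₁₁]
  · simp [genericBorder, borderEntries]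
  · simp [genericBorder, borderEntries, hN.apply_eq_neg (Sum.inr b)]
  · rcases lt_trichotomy b c with h | rfl | h
    · simp [genericBorder, genericStrictUpper, borderEntries, h, h.not_gt, h.le]
    · simp [genericBorder, hN.diag_eq_zero]
    · simp [genericBorder, genericStrictUpper, borderEntries, h, h.not_gt, h.le,
        hN.apply_eq_neg (Sum.inr b)]

theorem totalDegree_genericBorder_le [Nontrivial R] (B : Matrix ι ι R) (i j : ι ⊕ β) :
    (genericBorder β B i j).totalDegree ≤
      Sum.elim (fun _ => 0) (fun _ => 1) i + Sum.elim (fun _ => 0) (fun _ => 1) j := by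
  rcases i with i | b <;> rcases j with j | c
  · simp [genericBorder]
  · simp [genericBorder]
  · simp [genericBorder]
  · rcases lt_trichotomy b c with h | rfl | h
    · simp [genericBorder, genericStrictUpper, h, h.not_gt]
    · simp [genericBorder]
    · simp [genericBorder, genericStrictUpper, h, h.not_gt]

theorem totalDegree_det_genericBorder_submatrix_le [Nontrivial R] {κ : Type*} [Fintype κ]
    [DecidableEq κ] [Fintype β] (B : Matrix ι ι R) (f : κ → ι) :
    ((genericBorder β B).submatrix (Sum.map f id) (Sum.map f id)).det.totalDegree ≤
      2 * Fintype.card β := by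
  let r : κ ⊕ β → ℕ := Sum.elim (fun _ => 0) fun _ => 1
  refine (totalDegree_det_le _ r r fun i j => ?_).trans_eq ?_
  · refine (totalDegree_genericBorder_le B _ _).trans_eq ?_
    rcases i with i | i <;> rcases j with j | j <;> rfl
  · simp [r, two_mul]

/-- The polynomial is the Pfaffian of a principal submatrix of `genericBorder`. -/
theorem exists_totalDegree_le_eval_borderEntries_sq_eq_det [IsDomain R]
    [UniqueFactorizationMonoid R] {κ : Type*} [Fintype κ] [DecidableEq κ] [Fintype β]
    {B : Matrix ι ι R} (hB : IsAlternatingMatrix B) (f : κ → ι) :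
    ∃ p : MvPolynomial (BorderIndex ι β) R, p.totalDegree ≤ Fintype.card β ∧
      ∀ N : Matrix (ι ⊕ β) (ι ⊕ β) R, IsAlternatingMatrix N → N.toBlocks₁₁ = B →
        eval (borderEntries N) p ^ 2 = (N.submatrix (Sum.map f id) (Sum.map f id)).det := by
  obtain ⟨p, hp⟩ := (hB.genericBorder (β := β).submatrix (Sum.map f id)).isSquare_det
  refine ⟨p, ?_, ?_⟩
  · rcases eq_or_ne p 0 with rfl | hp₀
    · simp
    · have hdeg := totalDegree_det_genericBorder_submatrix_le (β := β) B f
      rw [hp, totalDegree_mul_of_isDomain hp₀ hp₀] at hdeg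
      lia
  · rintro N hN rfl
    rw [pow_two, ← map_mul, ← hp, RingHom.map_det, RingHom.mapMatrix_apply, ← submatrix_map,
      map_eval_genericBorder hN]

end GenericBorder

/-- The matrix `A[X ∪ Y]` with the elements of `Y` enumerated by `e`. Elements common to `X` and `Y`
contribute repeated rows and columns. -/
def borderedSubmatrix {V F β : Type*} (A : Matrix V V F) (X : Finset V) (e : β → V) :
    Matrix (X ⊕ β) (X ⊕ β) F :=
  A.submatrix (Sum.elim (↑) e) (Sum.elim (↑) e)

section Extension

variable {V F β : Type*} [DecidableEq V] [Field F] [Fintype β] {A : Matrix V V F}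

theorem extendsIn_iff_det_borderedSubmatrix_ne_zero [DecidableEq β] {X Y : Finset V} (e : β ≃ Y) :
    ExtendsIn A X Y ↔ (borderedSubmatrix A X fun b => e b).det ≠ 0 := by
  by_cases hXY : Disjoint X Y
  · let u : X ⊕ β ≃ ↥(X ∪ Y) :=
      ((Equiv.refl _).sumCongr e).trans (Equiv.Finset.union X Y hXY)
    have hu : Sum.elim ((↑) : X → V) (fun b => (e b : V)) = fun i => (u i : V) := by
      ext (x | b) <;> rfl
    have hsub : borderedSubmatrix A X (fun b => e b) = (principalSub A (X ∪ Y)).submatrix u u := by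
      rw [borderedSubmatrix, hu]
      rfl
    rw [hsub, det_submatrix_equiv_self, ExtendsIn, ← Finset.disjoint_iff_inter_eq_empty]
    exact and_iff_right hXY
  · obtain ⟨v, hvX, hvY⟩ := Finset.not_disjoint_iff.1 hXY
    have hdet : (borderedSubmatrix A X fun b => e b).det = 0 :=
      det_zero_of_row_eq (i := Sum.inl ⟨v, hvX⟩) (j := Sum.inr (e.symm ⟨v, hvY⟩))
        Sum.inl_ne_inr (by ext; simp [borderedSubmatrix])
    simp [ExtendsIn, ← Finset.disjoint_iff_inter_eq_empty, hXY, hdet]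

theorem exists_totalDegree_le_extendsIn_iff_eval_ne_zero [LinearOrder β]
    (hA : IsAlternatingMatrix A) {X T : Finset V} (hX : X ⊆ T) :
    ∃ p : MvPolynomial (BorderIndex T β) F, p.totalDegree ≤ Fintype.card β ∧
      ∀ (Y : Finset V) (e : β ≃ Y), ExtendsIn A X Y ↔
        eval (borderEntries (borderedSubmatrix A T fun b => e b)) p ≠ 0 := by
  let inclusion : X → T := fun x => ⟨x, hX x.2⟩
  obtain ⟨p, hdeg, hp⟩ := exists_totalDegree_le_eval_borderEntries_sq_eq_det (β := β)
    (hA.submatrix ((↑) : T → V)) inclusion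
  refine ⟨p, hdeg, fun Y e => ?_⟩
  have hsub : (borderedSubmatrix A T fun b => e b).submatrix (Sum.map inclusion id)
      (Sum.map inclusion id) = borderedSubmatrix A X fun b => e b := by
    rw [borderedSubmatrix, submatrix_submatrix, Sum.elim_comp_map]
    rfl
  have hsq : eval (borderEntries (borderedSubmatrix A T fun b => e b)) p ^ 2 =
      (borderedSubmatrix A X fun b => e b).det :=
    hsub ▸ hp _ (hA.submatrix _) rfl
  rw [extendsIn_iff_det_borderedSubmatrix_ne_zero e, ← hsq, pow_ne_zero_iff two_ne_zero]

end Extension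

theorem stmt_5_general {F : Type*} [Field F] {V : Type*} [DecidableEq V] {A : Matrix V V F}
    (hA : IsAlternatingMatrix A) (T : Finset V) (q : ℕ) (𝒮 : Set (Finset V))
    (h𝒮 : ∀ Y ∈ 𝒮, Y.card = q) :
    ∃ 𝒮' : Finset (Finset V), ↑𝒮' ⊆ 𝒮 ∧
      𝒮'.card ≤ (T.card * q + q * (q - 1) / 2 + q).choose q ∧
      ∀ X ⊆ T, (∃ Y ∈ 𝒮, ExtendsIn A X Y) → ∃ Y' ∈ 𝒮', ExtendsIn A X Y' := by
  let e (Y : 𝒮) : Fin q ≃ Y.1 := (Y.1.equivFinOfCardEq (h𝒮 Y Y.2)).symm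
  obtain ⟨s, hcard, hs⟩ := exists_finset_forall_eval_eq_zero
    (fun Y : 𝒮 => borderEntries (borderedSubmatrix A T fun b => e Y b)) q
  rw [card_borderIndex, Fintype.card_coe, Fintype.card_fin, Nat.choose_two_right] at hcard
  refine ⟨s.map (.subtype _), by simp, by rwa [Finset.card_map], fun X hX => ?_⟩
  rintro ⟨Y, hY, hext⟩
  obtain ⟨p, hdeg, hp⟩ := exists_totalDegree_le_extendsIn_iff_eval_ne_zero (β := Fin q) hA hX
  rw [Fintype.card_fin] at hdeg
  by_contra! hnone
  refine (hp Y (e ⟨Y, hY⟩)).1 hext (hs p hdeg (fun Z hZ => ?_) ⟨Y, hY⟩)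
  by_contra hne
  exact hnone Z (Finset.mem_map_of_mem _ hZ) ((hp Z (e Z)).2 hne)

/-- Delta-matroid representative sets, cardinality version.
Let `A` be a skew-symmetric matrix over a field `F` indexed by a finite set `V`,
`T ⊆ V` with `|T| = k`, and `𝒮` a family of `q`-element subsets of `V`. Then there
exists `𝒮' ⊆ 𝒮` with `|𝒮'| ≤ C(k·q + q·(q−1)/2 + q, q)` such that for every `X ⊆ T`:
if some `Y ∈ 𝒮` extends `X` w.r.t. `A`, then some `Y' ∈ 𝒮'` extends `X` w.r.t. `A`. -/
theorem stmt_5 {F : Type*} [Field F] {V : Type*} [Fintype V] [DecidableEq V]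
    (A : Matrix V V F) (hskew : ∀ u v, A u v = - A v u) (hdiag : ∀ v, A v v = 0)
    (T : Finset V) (k q : ℕ) (hT : T.card = k)
    (𝒮 : Finset (Finset V)) (h𝒮 : ∀ Y ∈ 𝒮, Y.card = q) :
    ∃ 𝒮' ⊆ 𝒮, 𝒮'.card ≤ (k * q + q * (q - 1) / 2 + q).choose q ∧
      ∀ X ⊆ T, (∃ Y ∈ 𝒮, ExtendsIn A X Y) → ∃ Y' ∈ 𝒮', ExtendsIn A X Y' := by
  obtain ⟨𝒮', hsub, hcard, hext⟩ := stmt_5_general ⟨hskew, hdiag⟩ T q 𝒮 h𝒮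
  exact ⟨𝒮', mod_cast hsub, hT ▸ hcard, hext⟩
end

section
/- Let F be a field, V a finite set, A a skew-symmetric matrix over F indexed by V, and T ⊆ V. Then the rank of the V × T submatrix A[·,T] (the columns of A indexed by T) equals the maximum of |S ∩ T| over all S ⊆ V such that the principal submatrix A[S] is nonsingular. -/
/-!
A finite set `B` of columns of `A` is independent if and only if it extends to a finite set `S`
with `A[S]` nonsingular; hence the rank of `A[·,T]`, the largest size of an independent `B ⊆ T`, is
the largest `|S ∩ T|`. To extend `B`, first cut down to a finite `U ⊇ B` whose rows already witness
the independence of `B`, then extend `B` to a column basis `S` of `A[U]`. The symmetry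
`A u v = ε σ(A v u)` turns a linear relation between columns into one between the rows with the
same indices, so the rows indexed by `S` span the rows of `A[U]`; and a spanning set of rows meets
a column basis in a submatrix with independent columns.
-/

open Submodule

section Submatrix

variable {R m n : Type*}

theorem linearIndependent_col_submatrix_of_span_row [CommRing R] {ι κ : Type*} [Finite κ]
    {A : Matrix m n R} {r : ι → m} {c : κ → n}
    (hcol : LinearIndependent R (A.submatrix id c).col)
    (hrow : ∀ i, A.row i ∈ span R (Set.range (A.row ∘ r))) :
    LinearIndependent R (A.submatrix r c).col := by
  have := Fintype.ofFinite κ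
  rw [← Matrix.mulVec_injective_iff, ← Matrix.coe_mulVecLin, injective_iff_map_eq_zero] at hcol ⊢
  intro x hx
  refine hcol x (funext fun i => ?_)
  let pairing : (n → R) →ₗ[R] R := ∑ k, x k • LinearMap.proj (c k)
  have pairing_row (i : m) : pairing (A.row i) = (A.submatrix id c).mulVec x i := by
    simp [pairing, Matrix.mulVec, dotProduct, mul_comm]
  have span_le_ker : span R (Set.range (A.row ∘ r)) ≤ pairing.ker := by
    rw [span_le, Set.range_subset_iff]
    exact fun j => (pairing_row (r j)).trans (congrFun hx j)
  exact (pairing_row i).symm.trans (span_le_ker (hrow i))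

theorem rank_submatrix_eq_finrank_span_image_col [CommSemiring R] (A : Matrix m n R)
    (T : Finset n) :
    (A.submatrix id ((↑) : T → n)).rank = Module.finrank R (span R (A.col '' T)) := by
  rw [Matrix.rank_eq_finrank_span_cols, Set.image_eq_range]
  rfl

theorem finrank_span_image_finset_eq_card [Ring R] [Nontrivial R] [StrongRankCondition R]
    {M : Type*} [AddCommGroup M] [Module R M] {v : n → M} {B : Finset n}
    (hB : LinearIndepOn R v B) : Module.finrank R (span R (v '' B)) = B.card := by
  rw [Set.image_eq_range]
  exact (finrank_span_eq_card hB).trans (Fintype.card_coe B)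

theorem card_le_rank_submatrix_of_linearIndepOn_col [CommRing R] [Nontrivial R]
    {A : Matrix m n R} {B T : Finset n} (hBT : B ⊆ T) (hB : LinearIndepOn R A.col B) :
    B.card ≤ (A.submatrix id ((↑) : T → n)).rank := by
  have : Module.Finite R (span R (A.col '' T)) := .span_of_finite R (T.finite_toSet.image _)
  rw [rank_submatrix_eq_finrank_span_image_col, ← finrank_span_image_finset_eq_card hB]
  exact finrank_mono (span_mono (Set.image_mono hBT))

variable {F : Type*} [Field F]

theorem exists_finset_linearIndependent_col_submatrix [Finite n] {A : Matrix m n F}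
    (hA : LinearIndependent F A.col) :
    ∃ I : Finset m, LinearIndependent F (A.submatrix ((↑) : I → m) id).col := by
  obtain ⟨I, -, -, hspan, hI⟩ :=
    exists_linearIndepOn_extension (linearIndepOn_empty F A.row) (Set.empty_subset Set.univ)
  have : Finite I := hI.linearIndependent.finite
  lift I to Finset m using I.toFinite
  refine ⟨I, linearIndependent_col_submatrix_of_span_row hA fun i => ?_⟩
  have hi := hspan (Set.mem_image_of_mem A.row (Set.mem_univ i))
  rwa [Set.image_eq_range] at hi

theorem exists_subset_linearIndepOn_col_card_eq_rank (A : Matrix m n F) (T : Finset n) :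
    ∃ B ⊆ T, LinearIndepOn F A.col B ∧ B.card = (A.submatrix id ((↑) : T → n)).rank := by
  obtain ⟨B, hBT, -, hspan, hB⟩ :=
    exists_linearIndepOn_extension (linearIndepOn_empty F A.col) (Set.empty_subset (T : Set n))
  lift B to Finset n using T.finite_toSet.subset hBT
  refine ⟨B, hBT, hB, ?_⟩
  rw [rank_submatrix_eq_finrank_span_image_col, ← finrank_span_image_finset_eq_card hB,
    span_eq_of_le _ hspan (span_mono (Set.image_mono hBT))]

end Submatrix

theorem linearIndepOn_col_of_det_principalSub_ne_zero {R V : Type*} [CommRing R] [IsDomain R]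
    [DecidableEq V] {A : Matrix V V R} {S : Finset V} (hS : (principalSub A S).det ≠ 0) :
    LinearIndepOn R A.col S :=
  .of_comp (LinearMap.funLeft R R ((↑) : S → V)) (Matrix.linearIndependent_cols_of_det_ne_zero hS)

theorem row_mem_span_of_col_mem_span {R V ι : Type*} [CommSemiring R] {ε : R} {σ : R →+* R}
    {A : Matrix V V R} (hA : ∀ u v, A u v = ε * σ (A v u)) {f : ι → V} {B : Set V} {v : V}
    (hv : (A.submatrix f id).col v ∈ span R ((A.submatrix f id).col '' B)) :
    (A.submatrix id f).row v ∈ span R ((A.submatrix id f).row '' B) := by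
  let twist : (ι → R) →ₛₗ[σ] (ι → R) :=
    { toFun x i := ε * σ (x i)
      map_add' x y := by ext; simp [mul_add]
      map_smul' c x := by ext; simp [mul_left_comm] }
  have twist_col (w : V) : twist ((A.submatrix f id).col w) = (A.submatrix id f).row w :=
    funext fun i => (hA w (f i)).symm
  have := image_span_subset_span twist _ (Set.mem_image_of_mem twist hv)
  simpa only [Set.image_image, twist_col, SetLike.mem_coe] using this

theorem exists_superset_det_principalSub_ne_zero {F V : Type*} [Field F] [DecidableEq V] {ε : F}
    {σ : F →+* F} {A : Matrix V V F} (hA : ∀ u v, A u v = ε * σ (A v u)) {B : Finset V}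
    (hB : LinearIndepOn F A.col B) :
    ∃ S, B ⊆ S ∧ (principalSub A S).det ≠ 0 := by
  obtain ⟨I, hI⟩ := exists_finset_linearIndependent_col_submatrix
    (A := A.submatrix id ((↑) : B → V)) hB
  let U := I ∪ B
  have hBU : LinearIndepOn F (A.submatrix ((↑) : U → V) id).col B :=
    .of_comp (LinearMap.funLeft F F (Set.inclusion Finset.subset_union_left)) hI
  obtain ⟨S, hSU, hBS, hspan, hS⟩ := exists_linearIndepOn_extension hBU
    (Finset.coe_subset.mpr Finset.subset_union_right)
  lift S to Finset V using U.finite_toSet.subset hSU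
  refine ⟨S, hBS, ?_⟩
  have row_mem_span (u : U) := row_mem_span_of_col_mem_span hA
    (hspan (Set.mem_image_of_mem _ u.2))
  simp only [Set.image_eq_range] at row_mem_span
  have hcol : LinearIndependent F (principalSub A S).col :=
    linearIndependent_col_submatrix_of_span_row (A := principalSub A U)
      (r := Set.inclusion hSU) (c := Set.inclusion hSU) hS row_mem_span
  exact ((Matrix.isUnit_iff_isUnit_det _).mp
    (Matrix.linearIndependent_cols_iff_isUnit.mp hcol)).ne_zero

theorem stmt_7_general {F V : Type*} [Field F] [DecidableEq V] {ε : F} {σ : F →+* F}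
    {A : Matrix V V F} (hA : ∀ u v, A u v = ε * σ (A v u)) (T : Finset V) :
    (∃ S : Finset V, (principalSub A S).det ≠ 0 ∧
        (S ∩ T).card = (A.submatrix id (fun t : ↥T => (t : V))).rank) ∧
    ∀ S : Finset V, (principalSub A S).det ≠ 0 →
        (S ∩ T).card ≤ (A.submatrix id (fun t : ↥T => (t : V))).rank := by
  have upper (S : Finset V) (hS : (principalSub A S).det ≠ 0) :
      (S ∩ T).card ≤ (A.submatrix id (fun t : ↥T => (t : V))).rank :=
    card_le_rank_submatrix_of_linearIndepOn_col Finset.inter_subset_right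
      ((linearIndepOn_col_of_det_principalSub_ne_zero hS).mono
        (Finset.coe_subset.mpr Finset.inter_subset_left))
  obtain ⟨B, hBT, hB, hcard⟩ := exists_subset_linearIndepOn_col_card_eq_rank A T
  obtain ⟨S, hBS, hS⟩ := exists_superset_det_principalSub_ne_zero hA hB
  exact ⟨⟨S, hS, (upper S hS).antisymm
    (hcard.symm.trans_le (Finset.card_le_card (Finset.subset_inter hBS hBT)))⟩, upper⟩

/-- Rank of a column set of a skew-symmetric matrix.
Let `A` be a skew-symmetric matrix over a field `F` indexed by a finite set `V` and
`T ⊆ V`. Then the rank of the `V × T` submatrix `A[·,T]` equals the maximum of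
`|S ∩ T|` over all `S ⊆ V` with `A[S]` nonsingular: the maximum is attained, and every
such `S` satisfies the corresponding upper bound. -/
theorem stmt_7 {F : Type*} [Field F] {V : Type*} [Fintype V] [DecidableEq V]
    (A : Matrix V V F) (hskew : ∀ u v, A u v = - A v u) (hdiag : ∀ v, A v v = 0)
    (T : Finset V) :
    (∃ S : Finset V, (principalSub A S).det ≠ 0 ∧
        (S ∩ T).card = (A.submatrix id (fun t : ↥T => (t : V))).rank) ∧
    ∀ S : Finset V, (principalSub A S).det ≠ 0 →
        (S ∩ T).card ≤ (A.submatrix id (fun t : ↥T => (t : V))).rank :=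
  stmt_7_general (ε := -1) (σ := .id F) (fun u v => by simpa using hskew u v) T
end

section
/- Let F be a field, V a finite set, and A a skew-symmetric matrix over F indexed by V. Let V⁺ = {v⁺ : v ∈ V} be a disjoint copy of V, and define a matrix A' indexed by V ∪ V⁺ by A'[u,v] = A'[u⁺,v] = A'[u,v⁺] = A'[u⁺,v⁺] = A[u,v] for all u, v ∈ V. Then A' is skew-symmetric, and for all X, Y ⊆ V: the principal submatrix A'[X ∪ Y⁺] is nonsingular (where Y⁺ = {v⁺ : v ∈ Y}) if and only if X ∩ Y = ∅ and A[X ∪ Y] is nonsingular. -/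
/-- The matrix `A'` indexed by `V ∪ V⁺` (a disjoint copy of `V`), all four of whose
blocks are copies of `A`: `A'[u,v] = A'[u⁺,v] = A'[u,v⁺] = A'[u⁺,v⁺] = A[u,v]`. -/
def doubledMatrix {V F : Type*} (A : Matrix V V F) : Matrix (V ⊕ V) (V ⊕ V) F :=
  A.submatrix (Sum.elim id id) (Sum.elim id id)

/-!
The matrix `A'` is the pullback of `A` along the folding map `V ∪ V⁺ → V`, so the theorem is about
principal submatrices of a pullback along a map `f`. If `f` is injective on `S`, it reindexes
`(f^* A)[S]` as `A[f(S)]`; otherwise two elements of `S` with the same image give equal rows.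
The folding map sends `X ∪ Y⁺` to `X ∪ Y`, and is injective on it iff `X` and `Y` are disjoint.
-/

section Pullback

variable {R V W : Type*} [CommRing R] [DecidableEq W] (A : Matrix V V R)

theorem det_principalSub_submatrix_of_not_injOn {f : W → V} {S : Finset W}
    (hf : ¬ Set.InjOn f S) : (principalSub (A.submatrix f f) S).det = 0 := by
  simp only [Set.InjOn, not_forall] at hf
  obtain ⟨i, hi, j, hj, hij, hne⟩ := hf
  have rows_eq : principalSub (A.submatrix f f) S ⟨i, hi⟩ =
      principalSub (A.submatrix f f) S ⟨j, hj⟩ :=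
    funext fun k => congrArg (A · (f k)) hij
  exact Matrix.det_zero_of_row_eq (Subtype.coe_ne_coe.1 hne) rows_eq

variable [DecidableEq V]

theorem det_principalSub_submatrix_of_injOn {f : W → V} {S : Finset W} (hf : Set.InjOn f S) :
    (principalSub (A.submatrix f f) S).det = (principalSub A (S.image f)).det :=
  let e : S ≃ S.image f :=
    (Equiv.Set.imageOfInjOn f S hf).trans (Equiv.setCongr Finset.coe_image.symm)
  Matrix.det_submatrix_equiv_self e (principalSub A (S.image f))

theorem det_principalSub_submatrix_ne_zero_iff (f : W → V) (S : Finset W) :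
    (principalSub (A.submatrix f f) S).det ≠ 0 ↔
      Set.InjOn f S ∧ (principalSub A (S.image f)).det ≠ 0 := by
  by_cases hf : Set.InjOn f S
  · rw [det_principalSub_submatrix_of_injOn A hf, and_iff_right hf]
  · simp only [det_principalSub_submatrix_of_not_injOn A hf, hf, false_and, ne_eq, not_true]

end Pullback

theorem injOn_sumElim_union_iff {α β γ : Type*} {f : α → γ} {g : β → γ} {s : Set α} {t : Set β} :
    Set.InjOn (Sum.elim f g) (Sum.inl '' s ∪ Sum.inr '' t) ↔
      Set.InjOn f s ∧ Set.InjOn g t ∧ Disjoint (f '' s) (g '' t) := by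
  have disjoint_inl_inr : Disjoint (Sum.inl '' s : Set (α ⊕ β)) (Sum.inr '' t) :=
    Set.disjoint_image_inl_image_inr
  rw [Set.injOn_union disjoint_inl_inr, ← Sum.inl_injective.injOn.comp_iff,
    ← Sum.inr_injective.injOn.comp_iff, Sum.elim_comp_inl, Sum.elim_comp_inr]
  simp only [Set.disjoint_iff_forall_ne, Set.forall_mem_image, Sum.elim_inl, Sum.elim_inr]

section Folding

variable {V : Type*} [DecidableEq V] (X Y : Finset V)

theorem injOn_sumElim_id_id_iff :
    Set.InjOn (Sum.elim id id) ((X.image Sum.inl ∪ Y.image Sum.inr : Finset (V ⊕ V)) : Set (V ⊕ V))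
      ↔ X ∩ Y = ∅ := by
  rw [Finset.coe_union, Finset.coe_image, Finset.coe_image, injOn_sumElim_union_iff]
  simp only [Set.injOn_id, Set.image_id, true_and, Finset.disjoint_coe,
    Finset.disjoint_iff_inter_eq_empty]

theorem image_sumElim_id_id :
    (X.image Sum.inl ∪ Y.image Sum.inr : Finset (V ⊕ V)).image (Sum.elim id id) = X ∪ Y := by
  simp only [Finset.image_union, Finset.image_image, Sum.elim_comp_inl, Sum.elim_comp_inr,
    Finset.image_id]

end Folding

theorem stmt_8_general {R V : Type*} [CommRing R] [DecidableEq V] (A : Matrix V V R) :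
    ((∀ x y : V ⊕ V, doubledMatrix A x y = -doubledMatrix A y x) ↔ ∀ u v, A u v = -A v u) ∧
    ((∀ x : V ⊕ V, doubledMatrix A x x = 0) ↔ ∀ v, A v v = 0) ∧
    ∀ X Y : Finset V,
      ((principalSub (doubledMatrix A) (X.image Sum.inl ∪ Y.image Sum.inr)).det ≠ 0 ↔
        X ∩ Y = ∅ ∧ (principalSub A (X ∪ Y)).det ≠ 0) := by
  have folding_surjective : Function.Surjective (Sum.elim id id : V ⊕ V → V) :=
    fun v => ⟨Sum.inl v, rfl⟩
  have skew_iff : (∀ x y : V ⊕ V, doubledMatrix A x y = -doubledMatrix A y x) ↔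
      ∀ u v, A u v = -A v u :=
    (folding_surjective.forall₂ (p := fun u v => A u v = -A v u)).symm
  have diag_iff : (∀ x : V ⊕ V, doubledMatrix A x x = 0) ↔ ∀ v, A v v = 0 :=
    (folding_surjective.forall (p := fun v => A v v = 0)).symm
  refine ⟨skew_iff, diag_iff, fun X Y => ?_⟩
  rw [doubledMatrix, det_principalSub_submatrix_ne_zero_iff, injOn_sumElim_id_id_iff,
    image_sumElim_id_id]

/-- Eliminating overlaps by duplicating ground-set elements.
Let `A` be skew-symmetric over `F`, indexed by `V`, and let `A'` be the doubled matrix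
indexed by `V ⊕ V`. Then `A'` is skew-symmetric, and for all `X, Y ⊆ V`, the principal
submatrix `A'[X ∪ Y⁺]` is nonsingular iff `X ∩ Y = ∅` and `A[X ∪ Y]` is nonsingular. -/
theorem stmt_8 {F : Type*} [Field F] {V : Type*} [Fintype V] [DecidableEq V]
    (A : Matrix V V F) (hskew : ∀ u v, A u v = - A v u) (hdiag : ∀ v, A v v = 0) :
    (∀ x y : V ⊕ V, doubledMatrix A x y = - doubledMatrix A y x) ∧
    (∀ x : V ⊕ V, doubledMatrix A x x = 0) ∧
    ∀ X Y : Finset V,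
      ((principalSub (doubledMatrix A) (X.image Sum.inl ∪ Y.image Sum.inr)).det ≠ 0 ↔
        X ∩ Y = ∅ ∧ (principalSub A (X ∪ Y)).det ≠ 0) :=
  have ⟨skew_iff, diag_iff, det_ne_zero_iff⟩ := stmt_8_general A
  ⟨skew_iff.2 hskew, diag_iff.2 hdiag, det_ne_zero_iff⟩
end

section
/- Let G be a finite simple graph, T ⊆ V(G) a set of terminals, and 𝒯 a partition of T. Let 𝓕 ⊆ 2^T be the family of all Mader matchable subsets of T. Then 𝓕 is nonempty (it contains the empty set) and satisfies the symmetric exchange axiom: for all A, B ∈ 𝓕 and every x ∈ A Δ B, there exists y ∈ A Δ B such that A Δ {x,y} ∈ 𝓕. Hence (T, 𝓕) is a delta-matroid (the Mader delta-matroid). -/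
/-- A Mader path (`𝒯`-path) in `G` with respect to the terminal set `T` and the
partition of `T` induced by the block-labelling `σ`: a path whose endpoints are
terminals lying in distinct blocks, and whose internal vertices avoid `T`. -/
def IsMaderPath {V : Type*} (G : SimpleGraph V) (T : Finset V) (σ : V → ℕ)
    {u v : V} (p : G.Walk u v) : Prop :=
  p.IsPath ∧ u ∈ T ∧ v ∈ T ∧ σ u ≠ σ v ∧
    ∀ x ∈ p.support, x ∈ T → x = u ∨ x = v

/-- `S` is Mader matchable in `(G, 𝒯)`: there is a collection of pairwise
vertex-disjoint Mader paths whose set of endpoints is exactly `S`. -/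
def MaderMatchable {V : Type*} (G : SimpleGraph V) (T : Finset V) (σ : V → ℕ)
    (S : Finset V) : Prop :=
  ∃ (n : ℕ) (a b : Fin n → V) (p : ∀ i, G.Walk (a i) (b i)),
    (∀ i, IsMaderPath G T σ (p i)) ∧
    (∀ i j, i ≠ j → ∀ x, x ∈ (p i).support → x ∉ (p j).support) ∧
    (∀ x, x ∈ S ↔ ∃ i, x = a i ∨ x = b i)

open scoped symmDiff

/-!
Put a potential and a flux in `ℚ²` at every vertex. Symmetric weights on the edges of `G` compute
the fluxes from the potentials, and the resulting families of pairs `(potential, flux)` form an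
isotropic space `L`. What happens at a vertex is encoded by a Lagrangian condition on its pair:
zero flux at an internal vertex, potential and flux on the line of slope `k` at a terminal in
block `k`, zero potential at a vertex that must be avoided. Then a set of terminals is matchable
if and only if, for some choice of weights, no nonzero member of `L` satisfies all the conditions.
In one direction the weights are built by hanging the vertices of a path on one another; in the
other, a pivot deletes a terminal and passes its line on to a neighbour, which traces out a path
until it meets a line of different slope.

Since transversality is generic in the weights, the same `L` serves for both `A` and `B`. Given
`x ∈ A ∆ B`, transversality for `A` yields `u ∈ L` that violates the conditions of `A` only at `x`,
where it satisfies the condition of `B`. As `u` is nonzero, it violates the condition of `B` at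
some `y`, necessarily in `A ∆ B`. Pairing with `u` shows that the conditions at `x` and `y` can be
switched together without losing transversality.
-/

namespace Mader

open LinearMap (BilinForm)

section Lagrangian

variable {K W : Type*} [Field K] [AddCommGroup W] [Module K W]

lemma inf_covBy_of_exists_sub_smul_mem {ℓ ℓ' : Submodule K W} {u : W} (hu : u ∈ ℓ) (hu' : u ∉ ℓ')
    (h : ∀ w ∈ ℓ, ∃ k : K, w - k • u ∈ ℓ') : ℓ ⊓ ℓ' ⋖ ℓ := by
  have hspan : K ∙ u ⊔ ℓ ⊓ ℓ' = ℓ := by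
    refine le_antisymm (sup_le ((Submodule.span_singleton_le_iff_mem u ℓ).2 hu) inf_le_left)
      fun w hw => ?_
    obtain ⟨k, hk⟩ := h w hw
    rw [← add_sub_cancel (k • u) w]
    exact Submodule.add_mem_sup (Submodule.smul_mem _ k (Submodule.mem_span_singleton_self u))
      ⟨ℓ.sub_mem hw (ℓ.smul_mem k hu), hk⟩
  have hcov : ℓ ⊓ ℓ' ⋖ K ∙ u ⊔ ℓ ⊓ ℓ' := Submodule.covBy_span_singleton_sup fun hmem => hu' hmem.2
  rwa [hspan] at hcov

lemma exists_sub_smul_mem_of_inf_covBy {ℓ ℓ' : Submodule K W} (hcov : ℓ ⊓ ℓ' ⋖ ℓ) {u w : W}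
    (hu : u ∈ ℓ) (hu' : u ∉ ℓ') (hw : w ∈ ℓ) : ∃ k : K, w - k • u ∈ ℓ ⊓ ℓ' := by
  have hspan : K ∙ u ⊔ ℓ ⊓ ℓ' = ℓ := by
    refine (hcov.eq_or_eq le_sup_right
      (sup_le ((Submodule.span_singleton_le_iff_mem u ℓ).2 hu) inf_le_left)).resolve_left ?_
    intro h
    exact hu' (sup_eq_right.1 h (Submodule.mem_span_singleton_self u)).2
  obtain ⟨_, hku, v, hv, rfl⟩ := Submodule.mem_sup.1 (hspan ▸ hw)
  obtain ⟨k, rfl⟩ := Submodule.mem_span_singleton.1 hku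
  exact ⟨k, by rwa [add_sub_cancel_left]⟩

/-- A Lagrangian subspace for the form `B`: one that equals its own orthogonal complement. -/
def IsLagrangian (B : BilinForm K W) (ℓ : Submodule K W) : Prop :=
  B.orthogonal ℓ = ℓ

namespace IsLagrangian

variable {B : BilinForm K W} {ℓ ℓ' : Submodule K W} {u w : W}

lemma apply_eq_zero (hℓ : IsLagrangian B ℓ) (hu : u ∈ ℓ) (hw : w ∈ ℓ) : B u w = 0 :=
  BilinForm.mem_orthogonal_iff.1 (hℓ.ge hw) u hu

lemma mem_of_inf_covBy (hℓ : IsLagrangian B ℓ) (hℓ' : IsLagrangian B ℓ') (hcov : ℓ ⊓ ℓ' ⋖ ℓ)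
    (hu : u ∈ ℓ) (hu' : u ∉ ℓ') (hw : w ∈ ℓ') (huw : B u w = 0) : w ∈ ℓ := by
  refine hℓ.le (BilinForm.mem_orthogonal_iff.2 fun v hv => ?_)
  obtain ⟨k, hk⟩ := exists_sub_smul_mem_of_inf_covBy hcov hu hu' hv
  have hvw := hℓ'.apply_eq_zero hk.2 hw
  simpa [huw] using hvw

end IsLagrangian

variable {ι : Type*} [Fintype ι] {B : BilinForm K W} {L : Submodule K (ι → W)}
  {c : ι → Submodule K W}

lemma exists_mem_of_codisjoint_pi [NeZero (2 : K)] (hB : B.IsSymm)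
    (hL : ∀ u ∈ L, ∀ w ∈ L, ∑ x, B (u x) (w x) = 0) (hc : ∀ x, IsLagrangian B (c x))
    (hcod : Codisjoint L (Submodule.pi Set.univ c)) {s : ι} {ℓ : Submodule K W}
    (hℓ : IsLagrangian B ℓ) (hcov : ℓ ⊓ c s ⋖ ℓ) :
    ∃ u ∈ L, (∀ x ≠ s, u x ∈ c x) ∧ u s ∈ ℓ ∧ u s ∉ c s := by
  classical
  obtain ⟨e, he, hes⟩ : ∃ e ∈ ℓ, e ∉ c s :=
    SetLike.not_le_iff_exists.1 fun hle => hcov.ne (inf_eq_left.2 hle)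
  obtain ⟨u, hu, p, hp, hup⟩ := Submodule.mem_sup.1
    (hcod.eq_top ▸ Submodule.mem_top : Pi.single s e ∈ L ⊔ Submodule.pi Set.univ c)
  replace hp : ∀ x, p x ∈ c x := fun x => hp x trivial
  have hux : ∀ x ≠ s, u x ∈ c x := by
    intro x hx
    have : u x = -p x := eq_neg_of_add_eq_zero_left (by simpa [hx] using congrFun hup x)
    exact this ▸ neg_mem (hp x)
  have hus : u s = e - p s := eq_sub_of_add_eq (by simpa using congrFun hup s)
  have huu : B (u s) (u s) = 0 := by
    rw [← hL u hu u hu, Finset.sum_eq_single s (fun x _ hx => (hc x).apply_eq_zero (hux x hx)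
      (hux x hx)) (by simp)]
  have hep : B e (p s) = 0 := by
    have h2 : 2 * B e (p s) = 0 := by
      simp only [hus, map_sub, LinearMap.sub_apply, hℓ.apply_eq_zero he he,
        (hc s).apply_eq_zero (hp s) (hp s), hB.eq (p s) e] at huu
      linear_combination -huu
    exact (mul_eq_zero.1 h2).resolve_left two_ne_zero
  have hps : p s ∈ ℓ := hℓ.mem_of_inf_covBy (hc s) hcov he hes (hp s) hep
  refine ⟨u, hu, hux, hus ▸ sub_mem he hps, fun hmem => hes ?_⟩
  rw [eq_add_of_sub_eq hus.symm]
  exact add_mem hmem (hp s)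

variable [DecidableEq ι]

lemma disjoint_pi_pivot (hL : ∀ u ∈ L, ∀ w ∈ L, ∑ x, B (u x) (w x) = 0)
    (hc : ∀ x, IsLagrangian B (c x)) (hdis : Disjoint L (Submodule.pi Set.univ c))
    {s y : ι} (hys : y ≠ s) {ℓ ℓ' : Submodule K W} (hℓ : IsLagrangian B ℓ)
    (hℓ' : IsLagrangian B ℓ') (hs : ℓ ⊓ c s ⋖ ℓ) (hy : c y ⊓ ℓ' ⋖ c y) {u : ι → W} (hu : u ∈ L)
    (hux : ∀ x ≠ s, u x ∈ c x) (hus : u s ∈ ℓ) (hus' : u s ∉ c s) (huy : u y ∉ ℓ') :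
    Disjoint L (Submodule.pi Set.univ (Function.update (Function.update c s ℓ) y ℓ')) := by
  rw [Submodule.disjoint_def] at hdis ⊢
  intro w hw hwpi
  have hwy : w y ∈ ℓ' := by simpa using hwpi y trivial
  have hws : w s ∈ ℓ := by simpa [hys.symm] using hwpi s trivial
  have hwx : ∀ x, x ≠ s → x ≠ y → w x ∈ c x := fun x hxs hxy => by
    simpa [hxs, hxy] using hwpi x trivial
  have huwy : B (u y) (w y) = 0 := by
    rw [← hL u hu w hw, Finset.sum_eq_single y _ (by simp)]
    intro x _ hxy
    rcases eq_or_ne x s with rfl | hxs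
    · exact hℓ.apply_eq_zero hus hws
    · exact (hc x).apply_eq_zero (hux x hxs) (hwx x hxs hxy)
  have hwyc : w y ∈ c y := (hc y).mem_of_inf_covBy hℓ' hy (hux y hys) huy hwy huwy
  obtain ⟨k, hk⟩ := exists_sub_smul_mem_of_inf_covBy hs hus hus' hws
  have hwu : w = k • u := by
    refine sub_eq_zero.1 (hdis _ (sub_mem hw (L.smul_mem k hu)) fun x _ => ?_)
    rcases eq_or_ne x s with rfl | hxs
    · exact hk.2
    · refine sub_mem ?_ ((c x).smul_mem k (hux x hxs))
      rcases eq_or_ne x y with rfl | hxy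
      · exact hwyc
      · exact hwx x hxs hxy
  have hk0 : k = 0 := by
    by_contra hk0
    exact huy ((ℓ'.smul_mem_iff hk0).1 (by simpa [hwu] using hwy))
  rw [hwu, hk0, zero_smul]

theorem exists_disjoint_pi_exchange [NeZero (2 : K)] (hB : B.IsSymm)
    (hL : ∀ u ∈ L, ∀ w ∈ L, ∑ x, B (u x) (w x) = 0) {c' : ι → Submodule K W}
    (hc : ∀ x, IsLagrangian B (c x)) (hc' : ∀ x, IsLagrangian B (c' x))
    (hcompl : IsCompl L (Submodule.pi Set.univ c)) (hdis : Disjoint L (Submodule.pi Set.univ c'))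
    (hcov : ∀ x, c x ≠ c' x → c x ⊓ c' x ⋖ c x) {s : ι} (hs : c' s ⊓ c s ⋖ c' s) :
    ∃ y, c y ≠ c' y ∧
      Disjoint L
        (Submodule.pi Set.univ (Function.update (Function.update c s (c' s)) y (c' y))) := by
  obtain ⟨u, hu, hux, hus, hus'⟩ :=
    exists_mem_of_codisjoint_pi hB hL hc hcompl.codisjoint (hc' s) hs
  obtain ⟨y, huy⟩ : ∃ y, u y ∉ c' y := by
    by_contra! h
    exact hus' (Submodule.disjoint_def.1 hdis u hu (fun x _ => h x) ▸ zero_mem (c s))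
  have hys : y ≠ s := fun h => huy (h ▸ hus)
  have hne : c y ≠ c' y := fun h => huy (h ▸ hux y hys)
  exact ⟨y, hne, disjoint_pi_pivot hL hc hcompl.disjoint hys (hc' s) (hc' y) hs (hcov y hne) hu
    hux hus hus' huy⟩

end Lagrangian

section Pencil

variable {K E : Type*} [Field K] [AddCommGroup E] [Module K E] [FiniteDimensional K E]

open AffineMap (lineMap)

lemma finite_setOf_not_injective_lineMap {P : Module.End K E} (hP : Function.Injective P)
    (Q : Module.End K E) : {t : K | ¬ Function.Injective (lineMap P Q t)}.Finite := by
  set e := LinearEquiv.ofInjectiveEndo P hP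
  set D : Module.End K E := e.symm.toLinearMap ∘ₗ (Q - P)
  refine ((Module.End.finite_hasEigenvalue (f := D)).image fun μ => -μ⁻¹).subset fun t ht => ?_
  -- A nonzero vector killed by `P + t (Q - P)` is an eigenvector of `P⁻¹ (Q - P)` for `-t⁻¹`.
  obtain ⟨v, hv, hv0⟩ : ∃ v, lineMap P Q t v = 0 ∧ v ≠ 0 := by
    simpa [injective_iff_map_eq_zero] using ht
  have hPv : P v = -(t • (Q - P) v) := by
    rw [AffineMap.lineMap_apply_module'] at hv
    exact eq_neg_of_add_eq_zero_right hv
  have ht0 : t ≠ 0 := by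
    rintro rfl
    exact hv0 (hP (by simpa using hPv))
  have hDv : D v = (-t⁻¹) • v := by
    rw [← smul_right_inj ht0]
    have : v = e.symm (P v) := (e.symm_apply_apply v).symm
    rw [smul_smul, mul_neg, mul_inv_cancel₀ ht0, neg_one_smul]
    conv_rhs => rw [this, hPv]
    simp [D]
  exact ⟨-t⁻¹, Module.End.hasEigenvalue_of_hasEigenvector
    (Module.End.hasEigenvector_iff.2 ⟨Module.End.mem_eigenspace_iff.2 hDv, hv0⟩), by simp⟩

lemma exists_injective_lineMap_lineMap [Infinite K] {P Q P' Q' : Module.End K E}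
    (hP : Function.Injective P) (hQ' : Function.Injective Q') :
    ∃ t : K, Function.Injective (lineMap P Q t) ∧ Function.Injective (lineMap P' Q' t) := by
  have hfin := (finite_setOf_not_injective_lineMap hP Q).union
    ((finite_setOf_not_injective_lineMap hQ' P').image fun t => 1 - t)
  obtain ⟨t, ht⟩ := hfin.exists_notMem
  rw [Set.mem_union, not_or] at ht
  refine ⟨t, not_not.1 ht.1, ?_⟩
  by_contra hinj
  exact ht.2 ⟨1 - t, by rwa [Set.mem_ofPred_eq, AffineMap.lineMap_apply_one_sub], by simp⟩

end Pencil

section VertexRoles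

variable (K : Type*)

/-- What a vertex is used for: a possible internal vertex of a path, an endpoint lying in the block
`color`, or nothing at all. -/
inductive VertexRole
  | internal
  | terminal (color : K)
  | deleted

variable {K} {V : Type*}

open VertexRole

/-- The vertices that have not been deleted. -/
def live (ρ : V → VertexRole K) : Set V :=
  {x | ρ x ≠ deleted}

lemma ncard_live_lt [Finite V] {ρ ρ' : V → VertexRole K} {s : V} (hs : ρ s ≠ deleted)
    (hs' : ρ' s = deleted) (h : ∀ x, ρ x = deleted → ρ' x = deleted) :
    (live ρ').ncard < (live ρ).ncard :=
  Set.ncard_lt_ncard ⟨fun x hx hρ => hx (h x hρ), fun hsub => hsub hs hs'⟩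

variable [DecidableEq V]

/-- The roles after a path has moved on from `s` to `v`, where `v` receives the role `r`. -/
def advance (ρ : V → VertexRole K) (s v : V) (r : VertexRole K) : V → VertexRole K :=
  Function.update (Function.update ρ s deleted) v r

variable {ρ : V → VertexRole K} {s v : V} {r : VertexRole K}

lemma advance_right : advance ρ s v r v = r :=
  Function.update_self ..

lemma advance_left (hsv : s ≠ v) : advance ρ s v r s = deleted := by
  simp [advance, hsv]

lemma advance_of_ne {x : V} (hxs : x ≠ s) (hxv : x ≠ v) : advance ρ s v r x = ρ x := by
  simp [advance, hxs, hxv]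

end VertexRoles

section Constraints

variable (K : Type*) [Field K]

/-- The determinant form `(a, b) ↦ a₁ b₂ - a₂ b₁` on the plane. -/
def area : BilinForm K (K × K) :=
  LinearMap.mk₂ K (fun a b => a.1 * b.2 - a.2 * b.1)
    (fun a a' b => by simp only [Prod.fst_add, Prod.snd_add]; ring)
    (fun k a b => by simp only [Prod.smul_fst, Prod.smul_snd, smul_eq_mul]; ring)
    (fun a b b' => by simp only [Prod.fst_add, Prod.snd_add]; ring)
    (fun k a b => by simp only [Prod.smul_fst, Prod.smul_snd, smul_eq_mul]; ring)

variable {K} in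
@[simp]
lemma area_apply (a b : K × K) : area K a b = a.1 * b.2 - a.2 * b.1 :=
  rfl

/-- The form `(a, b), (a', b') ↦ area a b' + area a' b` on pairs of a potential `a` and a flux `b`
at a vertex. -/
def nodeForm : BilinForm K ((K × K) × (K × K)) :=
  (area K).compl₁₂ (LinearMap.fst K _ _) (LinearMap.snd K _ _) +
    ((area K).compl₁₂ (LinearMap.fst K _ _) (LinearMap.snd K _ _)).flip

variable {K}

lemma nodeForm_apply (u w : (K × K) × (K × K)) :
    nodeForm K u w = area K u.1 w.2 + area K w.1 u.2 :=
  rfl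

lemma isSymm_nodeForm : (nodeForm K).IsSymm :=
  ⟨fun u w => add_comm (area K u.1 w.2) (area K w.1 u.2)⟩

namespace VertexRole

/-- Vanishes exactly on the line of slope `k` through the origin. -/
def slopeDefect (k : K) : K × K →ₗ[K] K :=
  LinearMap.snd K K K - k • LinearMap.fst K K K

lemma slopeDefect_apply (k : K) (a : K × K) : slopeDefect k a = a.2 - k * a.1 :=
  rfl

lemma slopeDefect_eq_zero {k : K} {a : K × K} : slopeDefect k a = 0 ↔ a.2 = k * a.1 :=
  sub_eq_zero

lemma eq_zero_of_slopeDefect_eq_zero {k l : K} (hkl : k ≠ l) {a : K × K}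
    (hk : slopeDefect k a = 0) (hl : slopeDefect l a = 0) : a = 0 := by
  rw [slopeDefect_eq_zero] at hk hl
  have h1 : a.1 = 0 := by
    have : (k - l) * a.1 = 0 := by linear_combination hl - hk
    exact (mul_eq_zero.1 this).resolve_left (sub_ne_zero.2 hkl)
  exact Prod.ext h1 (by simp [hk, h1])

/-- The linear condition that a role imposes on the pair `(potential, flux)` at a vertex: zero flux
at an internal vertex, potential and flux both on the line of slope `k` at a terminal of color `k`,
zero potential at a deleted vertex. -/
def constraint : VertexRole K → ((K × K) × (K × K) →ₗ[K] K × K)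
  | internal => LinearMap.snd K _ _
  | terminal k => (slopeDefect k).prodMap (slopeDefect k)
  | deleted => LinearMap.fst K _ _

/-- The Lagrangian subspace of pairs `(potential, flux)` admitted by a role. -/
def space (r : VertexRole K) : Submodule K ((K × K) × (K × K)) :=
  LinearMap.ker r.constraint

variable {u : (K × K) × (K × K)} {k : K}

@[simp]
lemma mem_space_internal : u ∈ (internal : VertexRole K).space ↔ u.2 = 0 :=
  Iff.rfl

@[simp]
lemma mem_space_terminal :
    u ∈ (terminal k).space ↔ slopeDefect k u.1 = 0 ∧ slopeDefect k u.2 = 0 :=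
  Prod.ext_iff

@[simp]
lemma mem_space_deleted : u ∈ (deleted : VertexRole K).space ↔ u.1 = 0 :=
  Iff.rfl

lemma isLagrangian_space (r : VertexRole K) : IsLagrangian (nodeForm K) r.space := by
  ext w
  rw [BilinForm.mem_orthogonal_iff]
  rcases r with _ | k | _
  · simp only [mem_space_internal, nodeForm_apply, area_apply]
    refine ⟨fun h => Prod.ext ?_ ?_, fun h u hu => by simp [h, hu]⟩
    · simpa using h ((0, 1), 0) rfl
    · simpa using h ((1, 0), 0) rfl
  · simp only [mem_space_terminal, slopeDefect_eq_zero, nodeForm_apply, area_apply]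
    refine ⟨fun h => ⟨?_, ?_⟩, fun h u hu => by rw [h.1, h.2, hu.1, hu.2]; ring⟩
    · have := h (0, (1, k)) (by simp)
      simp only [Prod.fst_zero, Prod.snd_zero] at this
      linear_combination -this
    · have := h ((1, k), 0) (by simp)
      simp only [Prod.fst_zero, Prod.snd_zero] at this
      linear_combination this
  · simp only [mem_space_deleted, nodeForm_apply, area_apply]
    refine ⟨fun h => Prod.ext ?_ ?_, fun h u hu => by simp [h, hu]⟩
    · simpa using h (0, (0, 1)) rfl
    · simpa using h (0, (1, 0)) rfl

lemma space_internal_inf_terminal_covBy (k : K) :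
    (internal : VertexRole K).space ⊓ (terminal k).space ⋖ (internal : VertexRole K).space :=
  inf_covBy_of_exists_sub_smul_mem (u := ((0, 1), 0)) rfl (by simp [slopeDefect_apply])
    fun w hw => ⟨slopeDefect k w.1, by simp_all [slopeDefect_apply]⟩

lemma space_terminal_inf_deleted_covBy (k : K) :
    (terminal k).space ⊓ (deleted : VertexRole K).space ⋖ (terminal k).space :=
  inf_covBy_of_exists_sub_smul_mem (u := ((1, k), 0)) (by simp [slopeDefect_apply]) (by simp)
    fun w hw => ⟨w.1.1, by
      simp_all [slopeDefect_eq_zero, Prod.ext_iff, mul_comm]⟩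

lemma space_deleted_inf_terminal_covBy (k : K) :
    (deleted : VertexRole K).space ⊓ (terminal k).space ⋖ (deleted : VertexRole K).space :=
  inf_covBy_of_exists_sub_smul_mem (u := (0, (0, 1))) rfl (by simp [slopeDefect_apply])
    fun w hw => ⟨slopeDefect k w.2, by simp_all [slopeDefect_apply]⟩

/-- A path leaving a terminal of color `k` may move on to a vertex of role `r`, which then receives
the role `r'`: an internal vertex takes over as the terminal of color `k`, and a terminal of another
color completes the path and is deleted. -/
inductive Link (k : K) : VertexRole K → VertexRole K → Prop
  | extend : Link k internal (terminal k)
  | close {l : K} (hkl : k ≠ l) : Link k (terminal l) deleted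

namespace Link

variable {r r' : VertexRole K}

lemma space_inf_covBy (h : Link k r r') : r.space ⊓ r'.space ⋖ r.space := by
  cases h with
  | extend => exact space_internal_inf_terminal_covBy k
  | close => exact space_terminal_inf_deleted_covBy _

lemma exists_of_mem_space (hu : u ∈ r.space) (hk : slopeDefect k u.1 ≠ 0) :
    ∃ r', Link k r r' ∧ u ∉ r'.space := by
  cases r with
  | internal => exact ⟨_, extend, fun h => hk (mem_space_terminal.1 h).1⟩
  | terminal l =>
    refine ⟨_, close (l := l) ?_, fun h => hk (by rw [mem_space_deleted.1 h, map_zero])⟩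
    rintro rfl
    exact hk (mem_space_terminal.1 hu).1
  | deleted => exact absurd (by rw [mem_space_deleted.1 hu, map_zero]) hk

lemma mem_space_of_add_mem (h : Link k r r') {a b d : K × K} (ha : slopeDefect k a = 0)
    (hd : slopeDefect k d = 0) (hmem : (a, b + d) ∈ r.space) : (a, b) ∈ r'.space := by
  cases h with
  | extend =>
    rw [mem_space_internal] at hmem
    exact mem_space_terminal.2 ⟨ha, by rw [eq_neg_of_add_eq_zero_left hmem, map_neg, hd, neg_zero]⟩
  | close hkl => exact eq_zero_of_slopeDefect_eq_zero hkl ha (mem_space_terminal.1 hmem).1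

lemma eq_zero_of_mem_space (h : Link k r r') {d : K × K} (hd : slopeDefect k d = 0)
    (hmem : (0, d) ∈ r.space) : d = 0 := by
  cases h with
  | extend => exact hmem
  | close hkl => exact eq_zero_of_slopeDefect_eq_zero hkl hd (mem_space_terminal.1 hmem).2

end Link

end VertexRole

end Constraints

section Networks

variable {K V : Type*} [Field K] [Fintype V]

open VertexRole

/-- The map sending a potential `z` to its pairs `(z x, ∑ y, m x y • z y)` of potential and flux in
the network with weights `m`. -/
def network (m : Matrix V V K) : (V → K × K) →ₗ[K] V → (K × K) × (K × K) :=
  LinearMap.pi fun x =>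
    (LinearMap.proj x).prod (∑ y, m x y • LinearMap.proj y)

lemma network_apply (m : Matrix V V K) (z : V → K × K) (x : V) :
    network m z x = (z x, ∑ y, m x y • z y) := by
  simp [network]

lemma sum_nodeForm_network {m : Matrix V V K} (hm : m.IsSymm) (z z' : V → K × K) :
    ∑ x, nodeForm K (network m z x) (network m z' x) = 0 := by
  have hneg (x y : V) :
      m x y * area K (z' x) (z y) = -(m y x * area K (z y) (z' x)) := by
    simp only [area_apply, hm.apply x y]
    ring
  simp only [nodeForm_apply, network_apply, map_sum, map_smul, smul_eq_mul, hneg,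
    Finset.sum_add_distrib, Finset.sum_neg_distrib]
  rw [Finset.sum_comm (f := fun x y => m y x * area K (z y) (z' x)), add_neg_cancel]

/-- No nonzero potential on the network with weights `m` satisfies the constraints of all the
roles. -/
def IsTransverse (m : Matrix V V K) (ρ : V → VertexRole K) : Prop :=
  Disjoint (LinearMap.range (network m)) (Submodule.pi Set.univ (space ∘ ρ))

lemma isTransverse_iff {m : Matrix V V K} {ρ : V → VertexRole K} :
    IsTransverse m ρ ↔ ∀ z, (∀ x, network m z x ∈ (ρ x).space) → z = 0 := by
  simp only [IsTransverse, Submodule.disjoint_def, LinearMap.mem_range, forall_exists_index,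
    forall_apply_eq_imp_iff, Submodule.mem_pi, Set.mem_univ, true_imp_iff, Function.comp_apply]
  refine forall₂_congr fun z _ => ⟨fun h => funext fun x => ?_, by rintro rfl; exact map_zero _⟩
  simpa [network_apply] using congrArg Prod.fst (congrFun h x)

/-- The square linear system expressing that a potential satisfies the constraints of the roles. -/
def boundaryMap (m : Matrix V V K) (ρ : V → VertexRole K) : Module.End K (V → K × K) :=
  LinearMap.pi fun x => (ρ x).constraint ∘ₗ LinearMap.proj x ∘ₗ network m

lemma boundaryMap_apply (m : Matrix V V K) (ρ : V → VertexRole K) (z : V → K × K) (x : V) :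
    boundaryMap m ρ z x = (ρ x).constraint (network m z x) :=
  rfl

lemma isTransverse_iff_injective {m : Matrix V V K} {ρ : V → VertexRole K} :
    IsTransverse m ρ ↔ Function.Injective (boundaryMap m ρ) := by
  rw [isTransverse_iff, injective_iff_map_eq_zero]
  exact forall_congr' fun z => imp_congr_left funext_iff.symm

lemma boundaryMap_lineMap (m m' : Matrix V V K) (ρ : V → VertexRole K) (t : K) :
    boundaryMap (AffineMap.lineMap m m' t) ρ =
      AffineMap.lineMap (boundaryMap m ρ) (boundaryMap m' ρ) t := by
  have hnet : network (AffineMap.lineMap m m' t) =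
      AffineMap.lineMap (network m) (network m') t := by
    refine LinearMap.ext fun z => funext fun x => ?_
    simp only [AffineMap.lineMap_apply_module', LinearMap.add_apply, LinearMap.smul_apply,
      LinearMap.sub_apply, Pi.add_apply, Pi.smul_apply, Pi.sub_apply, network_apply,
      Matrix.add_apply, Matrix.smul_apply, Matrix.sub_apply, add_smul, smul_assoc, sub_smul,
      Finset.sum_add_distrib, ← Finset.smul_sum, Finset.sum_sub_distrib]
    simp
  refine LinearMap.ext fun z => funext fun x => ?_
  simp only [boundaryMap_apply, hnet]
  simp [AffineMap.lineMap_apply_module', boundaryMap_apply]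

lemma IsTransverse.isCompl {m : Matrix V V K} {ρ : V → VertexRole K} (h : IsTransverse m ρ) :
    IsCompl (LinearMap.range (network m)) (Submodule.pi Set.univ (space ∘ ρ)) := by
  refine ⟨h, codisjoint_iff.2 (eq_top_iff.2 fun w _ => ?_)⟩
  obtain ⟨z, hz⟩ := LinearMap.injective_iff_surjective.1 (isTransverse_iff_injective.1 h)
    fun x => (ρ x).constraint (w x)
  rw [← add_sub_cancel (network m z) w]
  refine Submodule.add_mem_sup (LinearMap.mem_range_self _ z) fun x _ => ?_
  have hzx : (ρ x).constraint (network m z x) = (ρ x).constraint (w x) := congrFun hz x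
  simp [space, hzx]

lemma exists_isTransverse_lineMap [Infinite K] {m m' : Matrix V V K} {ρ ρ' : V → VertexRole K}
    (h : IsTransverse m ρ) (h' : IsTransverse m' ρ') :
    ∃ t : K, IsTransverse (AffineMap.lineMap m m' t) ρ ∧
      IsTransverse (AffineMap.lineMap m m' t) ρ' := by
  simp only [isTransverse_iff_injective, boundaryMap_lineMap] at h h' ⊢
  exact exists_injective_lineMap_lineMap h h'

lemma sum_nodeForm_of_mem_range_network {m : Matrix V V K} (hm : m.IsSymm) :
    ∀ u ∈ LinearMap.range (network m), ∀ w ∈ LinearMap.range (network m),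
      ∑ x, nodeForm K (u x) (w x) = 0 := by
  rintro _ ⟨z, rfl⟩ _ ⟨z', rfl⟩
  exact sum_nodeForm_network hm z z'

variable [DecidableEq V]

lemma IsTransverse.exchange [NeZero (2 : K)] {m : Matrix V V K} (hm : m.IsSymm)
    {ρ ρ' : V → VertexRole K} (h : IsTransverse m ρ) (h' : IsTransverse m ρ')
    (hcov : ∀ x, ρ x ≠ ρ' x → (ρ x).space ⊓ (ρ' x).space ⋖ (ρ x).space) {s : V}
    (hs : (ρ' s).space ⊓ (ρ s).space ⋖ (ρ' s).space) :
    ∃ y, ρ y ≠ ρ' y ∧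
      IsTransverse m (Function.update (Function.update ρ s (ρ' s)) y (ρ' y)) := by
  obtain ⟨y, hy, hdis⟩ := exists_disjoint_pi_exchange isSymm_nodeForm
    (sum_nodeForm_of_mem_range_network hm) (fun x => isLagrangian_space (ρ x))
    (fun x => isLagrangian_space (ρ' x)) h.isCompl h' (fun x hx => hcov x (ne_of_apply_ne _ hx)) hs
  refine ⟨y, ne_of_apply_ne _ hy, ?_⟩
  rw [IsTransverse, Function.comp_update, Function.comp_update]
  exact hdis

lemma IsTransverse.exists_link [NeZero (2 : K)] {m : Matrix V V K} (hm : m.IsSymm)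
    {ρ : V → VertexRole K} (h : IsTransverse m ρ) {s : V} {k : K} (hs : ρ s = terminal k) :
    ∃ v r, v ≠ s ∧ m s v ≠ 0 ∧ Link k (ρ v) r ∧
      IsTransverse m (advance ρ s v r) := by
  have hL := sum_nodeForm_of_mem_range_network hm
  have hc (x : V) := isLagrangian_space (ρ x)
  have hcov : (deleted : VertexRole K).space ⊓ (ρ s).space ⋖ (deleted : VertexRole K).space :=
    hs ▸ space_deleted_inf_terminal_covBy k
  obtain ⟨_, ⟨z, rfl⟩, hz, hzs, hzs'⟩ := exists_mem_of_codisjoint_pi isSymm_nodeForm hL hc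
    h.isCompl.codisjoint (isLagrangian_space deleted) hcov
  have hz0 : z s = 0 := by simpa [network_apply] using hzs
  obtain ⟨v, hv⟩ : ∃ v, m s v * slopeDefect k (z v) ≠ 0 := by
    by_contra! hall
    simp [hs, network_apply, hz0, hall] at hzs'
  have hvs : v ≠ s := by
    rintro rfl
    simp [hz0] at hv
  obtain ⟨r, hlink, hr⟩ := Link.exists_of_mem_space (hz v hvs) (k := k)
    (by simpa [network_apply] using right_ne_zero_of_mul hv)
  refine ⟨v, r, hvs, left_ne_zero_of_mul hv, hlink, ?_⟩
  rw [IsTransverse, advance, Function.comp_update, Function.comp_update]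
  exact disjoint_pi_pivot hL hc h hvs (isLagrangian_space deleted) (isLagrangian_space r) hcov
    hlink.space_inf_covBy ⟨z, rfl⟩ hz hzs hzs' hr

/-- Makes `s` a pendant vertex hanging on `v`: row and column `s` only keep a weight `1` at `v`. -/
def attachPendant (m : Matrix V V K) (s v : V) : Matrix V V K := fun x y =>
  if x = s then (if y = v then 1 else 0)
  else if y = s then (if x = v then 1 else 0) else m x y

variable {m : Matrix V V K} {s v : V}

lemma network_attachPendant_self (z : V → K × K) :
    network (attachPendant m s v) z s = (z s, z v) := by
  simp [network_apply, attachPendant]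

lemma network_attachPendant_of_ne {x : V} (hx : x ≠ s) (z : V → K × K) :
    network (attachPendant m s v) z x =
      network m (Function.update z s 0) x + (0, if x = v then z s else 0) := by
  have hsum : ∑ y, attachPendant m s v x y • z y =
      ∑ y, (m x y • Function.update z s 0 y + if y = s then if x = v then z s else 0 else 0) := by
    refine Finset.sum_congr rfl fun y _ => ?_
    by_cases hy : y = s <;> simp [attachPendant, hx, hy]
  simp [network_apply, hsum, Finset.sum_add_distrib, hx]

lemma isTransverse_attachPendant {ρ : V → VertexRole K} {k : K} {r : VertexRole K} (hsv : s ≠ v)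
    (hs : ρ s = terminal k) (hlink : Link k (ρ v) r)
    (h : IsTransverse m (advance ρ s v r)) :
    IsTransverse (attachPendant m s v) ρ := by
  rw [isTransverse_iff] at h ⊢
  intro z hz
  obtain ⟨hzs, hzv⟩ : slopeDefect k (z s) = 0 ∧ slopeDefect k (z v) = 0 := by
    simpa [hs, network_attachPendant_self] using hz s
  have hv := hz v
  rw [network_attachPendant_of_ne hsv.symm, if_pos rfl, network_apply, Prod.mk_add_mk, add_zero,
    Function.update_of_ne hsv.symm] at hv
  have hupd : Function.update z s 0 = 0 := by
    refine h _ fun x => ?_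
    rcases eq_or_ne x v with rfl | hxv
    · rw [advance_right, network_apply, Function.update_of_ne hsv.symm]
      exact hlink.mem_space_of_add_mem hzv hzs hv
    rcases eq_or_ne x s with rfl | hxs
    · simp [advance_left hsv, network_apply]
    · rw [advance_of_ne hxs hxv]
      simpa only [network_attachPendant_of_ne hxs, if_neg hxv, Prod.mk_zero_zero, add_zero]
        using hz x
  have hzv0 : z v = 0 := by simpa [hsv.symm] using congrFun hupd v
  have hzs0 : z s = 0 := by
    refine hlink.eq_zero_of_mem_space hzs ?_
    simpa [hupd, hzv0] using hv
  rw [← hupd, ← hzs0, Function.update_eq_self]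

lemma isTransverse_one {ρ : V → VertexRole K} (hρ : ∀ x k, ρ x ≠ terminal k) :
    IsTransverse (1 : Matrix V V K) ρ := by
  refine isTransverse_iff.2 fun z hz => funext fun x => ?_
  have hx := hz x
  simp only [network_apply, Matrix.one_apply, ite_smul, one_smul, zero_smul, Finset.sum_ite_eq,
    Finset.mem_univ, if_true] at hx
  rcases hr : ρ x with _ | k | _
  · exact mem_space_internal.1 (hr ▸ hx)
  · exact absurd hr (hρ x k)
  · exact mem_space_deleted.1 (hr ▸ hx)

end Networks

section Packings

open VertexRole

open SimpleGraph (Walk)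

variable {K V : Type*} {G : SimpleGraph V} {ρ : V → VertexRole K} {s t u v : V}
  {p : G.Walk s t} {k : K}

/-- A path joining two terminals of distinct colors through internal vertices. -/
structure IsLinkingPath (ρ : V → VertexRole K) (p : G.Walk s t) : Prop where
  isPath : p.IsPath
  exists_color_ne : ∃ k l, k ≠ l ∧ ρ s = terminal k ∧ ρ t = terminal l
  eq_internal : ∀ x ∈ p.support, x ≠ s → x ≠ t → ρ x = internal

lemma IsLinkingPath.ne_deleted (hp : IsLinkingPath ρ p) {x : V} (hx : x ∈ p.support) :
    ρ x ≠ deleted := by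
  obtain ⟨k, l, -, hs, ht⟩ := hp.exists_color_ne
  rcases eq_or_ne x s with rfl | hxs
  · simp [hs]
  rcases eq_or_ne x t with rfl | hxt
  · simp [ht]
  · simp [hp.eq_internal x hx hxs hxt]

lemma isLinkingPath_cons_nil {l : K} (hst : G.Adj s t) (hkl : k ≠ l) (hs : ρ s = terminal k)
    (ht : ρ t = terminal l) : IsLinkingPath ρ (.cons hst .nil) where
  isPath := by simpa using hst.ne
  exists_color_ne := ⟨k, l, hkl, hs, ht⟩
  eq_internal x hx hxs hxt := by simp_all

variable [DecidableEq V]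

lemma isLinkingPath_cons_iff {p : G.Walk v t} (hsv : G.Adj s v) (hs : ρ s = terminal k)
    (hv : ρ v = internal) :
    IsLinkingPath ρ (.cons hsv p) ↔ IsLinkingPath (advance ρ s v (terminal k)) p := by
  constructor
  · intro h
    obtain ⟨hp, hsp⟩ := (Walk.cons_isPath_iff hsv p).1 h.isPath
    obtain ⟨k', l, hkl, hs', ht⟩ := h.exists_color_ne
    obtain rfl : k = k' := VertexRole.terminal.inj (hs ▸ hs')
    have hne {x : V} (hx : x ∈ p.support) : x ≠ s := fun h => hsp (h ▸ hx)
    have htv : t ≠ v := by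
      rintro rfl
      simp [hv] at ht
    refine ⟨hp, ⟨k, l, hkl, advance_right, ?_⟩, fun x hx hxv hxt => ?_⟩
    · rw [advance_of_ne (hne p.end_mem_support) htv, ht]
    · rw [advance_of_ne (hne hx) hxv]
      exact h.eq_internal x (List.mem_cons_of_mem s hx) (hne hx) hxt
  · intro h
    have hne {x : V} (hx : x ∈ p.support) : x ≠ s := by
      rintro rfl
      exact h.ne_deleted hx (advance_left hsv.ne)
    obtain ⟨k', l, hkl, hv', ht⟩ := h.exists_color_ne
    obtain rfl : k = k' := VertexRole.terminal.inj (advance_right.symm.trans hv')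
    have htv : t ≠ v := by
      rintro rfl
      exact hkl (VertexRole.terminal.inj (hv'.symm.trans ht))
    rw [advance_of_ne (hne p.end_mem_support) htv] at ht
    refine ⟨h.isPath.cons fun hmem => hne hmem rfl, ⟨k, l, hkl, hs, ht⟩, fun x hx hxs hxt => ?_⟩
    rcases eq_or_ne x v with rfl | hxv
    · exact hv
    · rw [← advance_of_ne (ρ := ρ) (r := terminal k) hxs hxv]
      exact h.eq_internal x ((List.mem_cons.1 hx).resolve_left hxs) hxv hxt

/-- The roles after the vertices of `p` have been deleted. -/
def deletePath (ρ : V → VertexRole K) (p : G.Walk s t) (x : V) : VertexRole K :=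
  if x ∈ p.support then deleted else ρ x

lemma deletePath_of_mem {x : V} (hx : x ∈ p.support) : deletePath ρ p x = deleted :=
  if_pos hx

lemma deletePath_of_notMem {x : V} (hx : x ∉ p.support) : deletePath ρ p x = ρ x :=
  if_neg hx

lemma deletePath_advance {p : G.Walk v t} (hsv : G.Adj s v) (r : VertexRole K) :
    deletePath (advance ρ s v r) p = deletePath ρ (.cons hsv p) := by
  funext x
  by_cases hx : x ∈ p.support
  · rw [deletePath_of_mem hx, deletePath_of_mem (List.mem_cons_of_mem s hx)]
  have hxv : x ≠ v := fun h => hx (h ▸ p.start_mem_support)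
  rw [deletePath_of_notMem hx]
  rcases eq_or_ne x s with rfl | hxs
  · rw [advance_left hxv, deletePath_of_mem List.mem_cons_self]
  · rw [advance_of_ne hxs hxv,
      deletePath_of_notMem (List.not_mem_cons_of_ne_of_not_mem hxs hx)]

lemma deletePath_cons_nil (hst : G.Adj s t) :
    deletePath ρ (.cons hst .nil) = advance ρ s t deleted := by
  rw [← deletePath_advance hst deleted]
  funext x
  by_cases hx : x = t
  · rw [hx, deletePath_of_mem (Walk.start_mem_support _), advance_right]
  · exact deletePath_of_notMem (by simpa using hx)

lemma isLinkingPath_deletePath_iff {a b : V} {q : G.Walk a b} :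
    IsLinkingPath (deletePath ρ q) p ↔ IsLinkingPath ρ p ∧ p.support.Disjoint q.support := by
  constructor
  · intro h
    have hdis : p.support.Disjoint q.support := fun x hx hxq =>
      h.ne_deleted hx (deletePath_of_mem hxq)
    obtain ⟨k, l, hkl, hs, ht⟩ := h.exists_color_ne
    rw [deletePath_of_notMem (hdis p.start_mem_support)] at hs
    rw [deletePath_of_notMem (hdis p.end_mem_support)] at ht
    exact ⟨⟨h.isPath, ⟨k, l, hkl, hs, ht⟩, fun x hx hxs hxt =>
      deletePath_of_notMem (ρ := ρ) (hdis hx) ▸ h.eq_internal x hx hxs hxt⟩, hdis⟩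
  · rintro ⟨h, hdis⟩
    obtain ⟨k, l, hkl, hs, ht⟩ := h.exists_color_ne
    refine ⟨h.isPath, ⟨k, l, hkl, ?_, ?_⟩, fun x hx hxs hxt => ?_⟩
    · rw [deletePath_of_notMem (hdis p.start_mem_support), hs]
    · rw [deletePath_of_notMem (hdis p.end_mem_support), ht]
    · rw [deletePath_of_notMem (hdis hx), h.eq_internal x hx hxs hxt]

/-- Disjoint linking paths that together use up all the terminals. -/
structure IsPerfectPacking (ρ : V → VertexRole K) {n : ℕ} {a b : Fin n → V}
    (p : ∀ i, G.Walk (a i) (b i)) : Prop where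
  isLinkingPath : ∀ i, IsLinkingPath ρ (p i)
  disjoint : ∀ i j, i ≠ j → (p i).support.Disjoint (p j).support
  exists_endpoint : ∀ x k, ρ x = terminal k → ∃ i, x = a i ∨ x = b i

lemma isPerfectPacking_succ_iff {n : ℕ} {a b : Fin (n + 1) → V} {p : ∀ i, G.Walk (a i) (b i)} :
    IsPerfectPacking ρ p ↔
      IsLinkingPath ρ (p 0) ∧ IsPerfectPacking (deletePath ρ (p 0)) fun i : Fin n => p i.succ := by
  constructor
  · rintro ⟨hlink, hdis, hend⟩
    refine ⟨hlink 0, fun i => isLinkingPath_deletePath_iff.2 ⟨hlink _, hdis _ _ i.succ_ne_zero⟩,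
      fun i j hij => hdis _ _ ((Fin.succ_injective n).ne hij), fun x k hx => ?_⟩
    have hx0 : x ∉ (p 0).support := fun h => by simp [deletePath_of_mem h] at hx
    obtain ⟨i, hi⟩ := hend x k (by rwa [deletePath_of_notMem hx0] at hx)
    cases i using Fin.cases with
    | zero => rcases hi with rfl | rfl <;> simp at hx0
    | succ i => exact ⟨i, hi⟩
  · rintro ⟨hlink, hpack⟩
    have hlink' (i : Fin n) := isLinkingPath_deletePath_iff.1 (hpack.isLinkingPath i)
    refine ⟨Fin.cases hlink fun i => (hlink' i).1, fun i j hij => ?_, fun x k hx => ?_⟩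
    · cases i using Fin.cases with
      | zero =>
        cases j using Fin.cases with
        | zero => exact absurd rfl hij
        | succ j => exact (hlink' j).2.symm
      | succ i =>
        cases j using Fin.cases with
        | zero => exact (hlink' i).2
        | succ j => exact hpack.disjoint i j (ne_of_apply_ne _ hij)
    · by_cases hx0 : x ∈ (p 0).support
      · refine ⟨0, or_iff_not_imp_left.2 fun hxa => by_contra fun hxb => ?_⟩
        simp [hlink.eq_internal x hx0 hxa hxb] at hx
      · obtain ⟨i, hi⟩ := hpack.exists_endpoint x k (by rwa [deletePath_of_notMem hx0])
        exact ⟨i.succ, hi⟩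

end Packings

section Realizability

open VertexRole

variable {K V : Type*} [Field K] {G : SimpleGraph V}

variable (K G) in
/-- The symmetric matrices whose off-diagonal entries are supported on the edges of `G`. -/
def weightMatrices : Submodule K (Matrix V V K) where
  carrier := {m | m.IsSymm ∧ ∀ x y, x ≠ y → ¬ G.Adj x y → m x y = 0}
  zero_mem' := ⟨Matrix.isSymm_zero, fun _ _ _ _ => rfl⟩
  add_mem' h h' := ⟨h.1.add h'.1, fun x y hxy hadj => by simp [h.2 x y hxy hadj, h'.2 x y hxy hadj]⟩
  smul_mem' t _ h := ⟨h.1.smul t, fun x y hxy hadj => by simp [h.2 x y hxy hadj]⟩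

lemma lineMap_mem_weightMatrices {m m' : Matrix V V K} (hm : m ∈ weightMatrices K G)
    (hm' : m' ∈ weightMatrices K G) (t : K) : AffineMap.lineMap m m' t ∈ weightMatrices K G := by
  rw [AffineMap.lineMap_apply_module]
  exact add_mem (Submodule.smul_mem _ _ hm) (Submodule.smul_mem _ _ hm')

variable [DecidableEq V]

lemma one_mem_weightMatrices : 1 ∈ weightMatrices K G :=
  ⟨Matrix.isSymm_one, fun _ _ hxy _ => Matrix.one_apply_ne hxy⟩

lemma attachPendant_mem_weightMatrices {m : Matrix V V K} (hm : m ∈ weightMatrices K G) {s v : V}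
    (hsv : G.Adj s v) : attachPendant m s v ∈ weightMatrices K G := by
  refine ⟨Matrix.IsSymm.ext fun x y => ?_, fun x y hxy hadj => ?_⟩
  · by_cases hx : x = s <;> by_cases hy : y = s <;> simp [attachPendant, hx, hy, hm.1.apply x y]
  · by_cases hx : x = s
    · subst hx
      have hyv : y ≠ v := fun h => hadj (h ▸ hsv)
      simp [attachPendant, hyv]
    by_cases hy : y = s
    · subst hy
      have hxv : x ≠ v := fun h => hadj (h ▸ hsv.symm)
      simp [attachPendant, hx, hxv]
    simp [attachPendant, hx, hy, hm.2 x y hxy hadj]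

variable [Fintype V]

variable (G) in
/-- Some choice of weights on `G` makes the network transverse to the given roles. -/
def IsRealizable (ρ : V → VertexRole K) : Prop :=
  ∃ m ∈ weightMatrices K G, IsTransverse m ρ

namespace IsRealizable

variable {ρ ρ' : V → VertexRole K} {s v : V} {k : K} {r : VertexRole K}

theorem exchange [Infinite K] [NeZero (2 : K)] (h : IsRealizable G ρ) (h' : IsRealizable G ρ')
    (hcov : ∀ x, ρ x ≠ ρ' x → (ρ x).space ⊓ (ρ' x).space ⋖ (ρ x).space)
    (hs : (ρ' s).space ⊓ (ρ s).space ⋖ (ρ' s).space) :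
    ∃ y, ρ y ≠ ρ' y ∧
      IsRealizable G (Function.update (Function.update ρ s (ρ' s)) y (ρ' y)) := by
  obtain ⟨m, hm, hmρ⟩ := h
  obtain ⟨m', hm', hmρ'⟩ := h'
  obtain ⟨t, ht, ht'⟩ := exists_isTransverse_lineMap hmρ hmρ'
  have hmem := lineMap_mem_weightMatrices hm hm' t
  obtain ⟨y, hy, htrans⟩ := ht.exchange hmem.1 ht' hcov hs
  exact ⟨y, hy, _, hmem, htrans⟩

lemma of_advance (h : IsRealizable G (advance ρ s v r)) (hadj : G.Adj s v)
    (hs : ρ s = terminal k) (hlink : Link k (ρ v) r) : IsRealizable G ρ := by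
  obtain ⟨m, hm, htrans⟩ := h
  exact ⟨_, attachPendant_mem_weightMatrices hm hadj,
    isTransverse_attachPendant hadj.ne hs hlink htrans⟩

end IsRealizable

section DeletePath

open SimpleGraph (Walk)

variable {ρ : V → VertexRole K} {s t : V} {p : G.Walk s t} {k : K}

lemma IsRealizable.of_deletePath (h : IsRealizable G (deletePath ρ p)) (hp : IsLinkingPath ρ p) :
    IsRealizable G ρ := by
  induction p generalizing ρ with
  | nil =>
    obtain ⟨k, l, hkl, hs, ht⟩ := hp.exists_color_ne
    exact absurd (VertexRole.terminal.inj (hs.symm.trans ht)) hkl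
  | @cons s v t hsv q ih =>
    obtain ⟨k, l, hkl, hs, ht⟩ := hp.exists_color_ne
    rcases eq_or_ne v t with rfl | hvt
    · obtain rfl := (Walk.isPath_iff_nil.1 hp.isPath.of_cons).eq_nil
      rw [deletePath_cons_nil] at h
      exact h.of_advance hsv hs (ht ▸ .close hkl)
    · have hv : ρ v = internal :=
        hp.eq_internal v (List.mem_cons_of_mem s q.start_mem_support) hsv.ne' hvt
      rw [← deletePath_advance hsv (terminal k)] at h
      exact (ih h ((isLinkingPath_cons_iff hsv hs hv).1 hp)).of_advance hsv hs (hv ▸ .extend)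

lemma IsTransverse.exists_isLinkingPath [NeZero (2 : K)] {m : Matrix V V K}
    (hm : m ∈ weightMatrices K G) (h : IsTransverse m ρ) (hs : ρ s = terminal k) :
    ∃ (t : V) (p : G.Walk s t), IsLinkingPath ρ p ∧ IsTransverse m (deletePath ρ p) := by
  induction hn : (live ρ).ncard using Nat.strong_induction_on generalizing ρ s with
  | _ n ih
  subst hn
  obtain ⟨v, r, hvs, hmsv, hlink, hadv⟩ := h.exists_link hm.1 hs
  have hsv : G.Adj s v := by_contra fun hadj => hmsv (hm.2 s v hvs.symm hadj)
  generalize hv : ρ v = r₀ at hlink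
  cases hlink with
  | close hkl =>
    rw [← deletePath_cons_nil hsv] at hadv
    exact ⟨v, .cons hsv .nil, isLinkingPath_cons_nil hsv hkl hs hv, hadv⟩
  | extend =>
    have hlt : (live (advance ρ s v (terminal k))).ncard < (live ρ).ncard := by
      refine ncard_live_lt (by simp [hs]) (advance_left hsv.ne) fun x hx => ?_
      rwa [advance_of_ne] <;> rintro rfl <;> simp_all
    obtain ⟨t, p, hp, htrans⟩ := ih _ hlt hadv advance_right rfl
    rw [deletePath_advance hsv] at htrans
    exact ⟨t, .cons hsv p, (isLinkingPath_cons_iff hsv hs hv).2 hp, htrans⟩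

end DeletePath

end Realizability

section PerfectPackings

open VertexRole

variable {K V : Type*} [Field K] [Fintype V] {G : SimpleGraph V} {ρ : V → VertexRole K}

lemma IsPerfectPacking.isRealizable {n : ℕ} {a b : Fin n → V} {p : ∀ i, G.Walk (a i) (b i)}
    (hp : IsPerfectPacking ρ p) : IsRealizable G ρ := by
  classical
  induction n generalizing ρ with
  | zero =>
    refine ⟨1, one_mem_weightMatrices, isTransverse_one fun x k hx => ?_⟩
    exact (hp.exists_endpoint x k hx).elim fun i _ => i.elim0
  | succ n ih =>
    obtain ⟨hlink, hpack⟩ := isPerfectPacking_succ_iff.1 hp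
    exact (ih hpack).of_deletePath hlink

lemma IsTransverse.exists_isPerfectPacking [NeZero (2 : K)] {m : Matrix V V K}
    (hm : m ∈ weightMatrices K G) (h : IsTransverse m ρ) :
    ∃ (n : ℕ) (a b : Fin n → V) (p : ∀ i, G.Walk (a i) (b i)), IsPerfectPacking ρ p := by
  induction hn : (live ρ).ncard using Nat.strong_induction_on generalizing ρ with
  | _ n ih
  subst hn
  classical
  by_cases hterm : ∃ s k, ρ s = terminal k
  · obtain ⟨s, k, hs⟩ := hterm
    obtain ⟨t, q, hq, htrans⟩ := h.exists_isLinkingPath hm hs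
    have hlt : (live (deletePath ρ q)).ncard < (live ρ).ncard := by
      refine ncard_live_lt (hq.ne_deleted q.start_mem_support)
        (deletePath_of_mem q.start_mem_support) fun x hx => ?_
      rw [deletePath, hx, ite_self]
    obtain ⟨n, a, b, p, hp⟩ := ih _ hlt htrans rfl
    let p' : ∀ i, G.Walk (Fin.cons (α := fun _ => V) s a i) (Fin.cons (α := fun _ => V) t b i) :=
      Fin.cases q p
    exact ⟨n + 1, _, _, p', isPerfectPacking_succ_iff.2 ⟨hq, hp⟩⟩
  · push Not at hterm
    exact ⟨0, Fin.elim0, Fin.elim0, fun i => i.elim0, fun i => i.elim0, fun i => i.elim0,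
      fun x k hx => absurd hx (hterm x k)⟩

theorem isRealizable_iff_exists_isPerfectPacking [NeZero (2 : K)] :
    IsRealizable G ρ ↔
      ∃ (n : ℕ) (a b : Fin n → V) (p : ∀ i, G.Walk (a i) (b i)), IsPerfectPacking ρ p :=
  ⟨fun ⟨_, hm, h⟩ => h.exists_isPerfectPacking hm, fun ⟨_, _, _, _, hp⟩ => hp.isRealizable⟩

end PerfectPackings

section MaderRoles

open VertexRole

variable {V : Type*} [DecidableEq V] {G : SimpleGraph V} {T A B S : Finset V} {σ : V → ℕ}

/-- The roles for which the perfect packings are the packings of Mader paths with endpoint set `S`: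
the terminals outside `S` must be avoided, and are deleted. -/
def maderRoles (T : Finset V) (σ : V → ℕ) (S : Finset V) (x : V) : VertexRole ℚ :=
  if x ∈ S then terminal (σ x) else if x ∈ T then deleted else internal

lemma maderRoles_eq_terminal_iff {x : V} {k : ℚ} :
    maderRoles T σ S x = terminal k ↔ x ∈ S ∧ σ x = k := by
  unfold maderRoles
  split_ifs <;> simp_all

lemma maderRoles_eq_internal_iff (hS : S ⊆ T) {x : V} :
    maderRoles T σ S x = internal ↔ x ∉ T := by
  unfold maderRoles
  split_ifs with hxS hxT <;> simp_all [hS _]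

lemma isLinkingPath_maderRoles_iff (hS : S ⊆ T) {u v : V} {p : G.Walk u v} :
    IsLinkingPath (maderRoles T σ S) p ↔ IsMaderPath G T σ p ∧ u ∈ S ∧ v ∈ S := by
  constructor
  · rintro ⟨hp, ⟨k, l, hkl, hu, hv⟩, hint⟩
    obtain ⟨huS, rfl⟩ := maderRoles_eq_terminal_iff.1 hu
    obtain ⟨hvS, rfl⟩ := maderRoles_eq_terminal_iff.1 hv
    refine ⟨⟨hp, hS huS, hS hvS, fun h => hkl (congrArg _ h), fun x hx hxT => ?_⟩, huS, hvS⟩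
    by_contra! hne
    exact (maderRoles_eq_internal_iff hS).1 (hint x hx hne.1 hne.2) hxT
  · rintro ⟨⟨hp, -, -, huv, hint⟩, huS, hvS⟩
    refine ⟨hp, ⟨σ u, σ v, Nat.cast_injective.ne huv, maderRoles_eq_terminal_iff.2 ⟨huS, rfl⟩,
      maderRoles_eq_terminal_iff.2 ⟨hvS, rfl⟩⟩, fun x hx hxu hxv => ?_⟩
    exact (maderRoles_eq_internal_iff hS).2 fun hxT => (hint x hx hxT).elim hxu hxv

lemma maderMatchable_iff_exists_isPerfectPacking : MaderMatchable G T σ S ↔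
    S ⊆ T ∧ ∃ (n : ℕ) (a b : Fin n → V) (p : ∀ i, G.Walk (a i) (b i)),
      IsPerfectPacking (maderRoles T σ S) p := by
  constructor
  · rintro ⟨n, a, b, p, hp, hdis, hend⟩
    have hS : S ⊆ T := by
      intro x hx
      obtain ⟨i, rfl | rfl⟩ := (hend x).1 hx
      exacts [(hp i).2.1, (hp i).2.2.1]
    refine ⟨hS, n, a, b, p, fun i => ?_, hdis, fun x k hx => ?_⟩
    · exact (isLinkingPath_maderRoles_iff hS).2
        ⟨hp i, (hend _).2 ⟨i, .inl rfl⟩, (hend _).2 ⟨i, .inr rfl⟩⟩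
    · exact (hend x).1 (maderRoles_eq_terminal_iff.1 hx).1
  · rintro ⟨hS, n, a, b, p, hlink, hdis, hend⟩
    have hp (i : Fin n) := (isLinkingPath_maderRoles_iff hS).1 (hlink i)
    refine ⟨n, a, b, p, fun i => (hp i).1, hdis, fun x => ⟨fun hx => ?_, ?_⟩⟩
    · exact hend x (σ x) (maderRoles_eq_terminal_iff.2 ⟨hx, rfl⟩)
    · rintro ⟨i, rfl | rfl⟩
      exacts [(hp i).2.1, (hp i).2.2]

lemma maderRoles_ne_iff (hA : A ⊆ T) (hB : B ⊆ T) {x : V} :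
    maderRoles T σ A x ≠ maderRoles T σ B x ↔ x ∈ A ∆ B := by
  have hAT := @hA x
  have hBT := @hB x
  by_cases hxA : x ∈ A <;> by_cases hxB : x ∈ B <;>
    simp_all [maderRoles, Finset.mem_symmDiff]

lemma maderRoles_space_inf_covBy (hA : A ⊆ T) (hB : B ⊆ T) {x : V} (hx : x ∈ A ∆ B) :
    (maderRoles T σ A x).space ⊓ (maderRoles T σ B x).space ⋖ (maderRoles T σ A x).space := by
  rcases Finset.mem_symmDiff.1 hx with ⟨hxA, hxB⟩ | ⟨hxB, hxA⟩
  · simpa [maderRoles, hxA, hxB, hA hxA] using space_terminal_inf_deleted_covBy (σ x : ℚ)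
  · simpa [maderRoles, hxA, hxB, hB hxB] using space_deleted_inf_terminal_covBy (σ x : ℚ)

lemma update_maderRoles {x y : V} (hx : x ∈ A ∆ B) (hy : y ∈ A ∆ B) :
    Function.update (Function.update (maderRoles T σ A) x (maderRoles T σ B x)) y
      (maderRoles T σ B y) = maderRoles T σ (A ∆ {x, y}) := by
  have hmem {z : V} (hz : z ∈ A ∆ B) (hzxy : z = x ∨ z = y) : z ∈ A ∆ {x, y} ↔ z ∈ B := by
    simp only [Finset.mem_symmDiff, Finset.mem_insert, Finset.mem_singleton] at hz ⊢
    tauto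
  funext z
  rcases eq_or_ne z y with rfl | hzy
  · simp [maderRoles, hmem hy]
  rw [Function.update_of_ne hzy]
  rcases eq_or_ne z x with rfl | hzx
  · simp [maderRoles, hmem hx]
  · simp [maderRoles, Finset.mem_symmDiff, hzx, hzy]

variable [Fintype V]

theorem maderMatchable_iff_isRealizable :
    MaderMatchable G T σ S ↔ S ⊆ T ∧ IsRealizable G (maderRoles T σ S) := by
  rw [maderMatchable_iff_exists_isPerfectPacking, isRealizable_iff_exists_isPerfectPacking]

end MaderRoles

end Mader

/-- The Mader delta-matroid.
For a graph `G`, terminals `T`, and a partition of `T` (given by the block-labelling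
`σ`), the family of Mader matchable subsets of `T` contains `∅` and satisfies the
symmetric exchange axiom; hence it is a delta-matroid. -/
theorem stmt_10 {V : Type*} [Fintype V] [DecidableEq V]
    (G : SimpleGraph V) (T : Finset V) (σ : V → ℕ) :
    MaderMatchable G T σ ∅ ∧
    ∀ A B : Finset V, MaderMatchable G T σ A → MaderMatchable G T σ B →
      ∀ x ∈ A ∆ B, ∃ y ∈ A ∆ B, MaderMatchable G T σ (A ∆ ({x, y} : Finset V)) := by
  refine ⟨⟨0, Fin.elim0, Fin.elim0, fun i => i.elim0, by simp⟩, fun A B hA hB x hx => ?_⟩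
  obtain ⟨hAT, hA⟩ := Mader.maderMatchable_iff_isRealizable.1 hA
  obtain ⟨hBT, hB⟩ := Mader.maderMatchable_iff_isRealizable.1 hB
  obtain ⟨y, hy, hreal⟩ := hA.exchange hB
    (fun z hz => Mader.maderRoles_space_inf_covBy hAT hBT ((Mader.maderRoles_ne_iff hAT hBT).1 hz))
    (Mader.maderRoles_space_inf_covBy hBT hAT (symmDiff_comm A B ▸ hx))
  rw [Mader.maderRoles_ne_iff hAT hBT] at hy
  rw [Mader.update_maderRoles hx hy] at hreal
  have hsub : A ∆ {x, y} ⊆ T := by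
    have hAB : A ∆ B ⊆ T := symmDiff_le_sup.trans (Finset.union_subset hAT hBT)
    have hxy : {x, y} ⊆ T := Finset.insert_subset (hAB hx) (Finset.singleton_subset_iff.2 (hAB hy))
    exact symmDiff_le_sup.trans (Finset.union_subset hAT hxy)
  exact ⟨y, hy, Mader.maderMatchable_iff_isRealizable.2 ⟨hsub, hreal⟩⟩
end
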